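/- For a closed subsemigroup 𝔖 of SL(n+1,ℝ), 𝔖 acts distally on Sⁿ (via T·x = T(x)/‖T(x)‖) if and only if every cyclic subsemigroup {Tᵐ : m ∈ ℕ}, T ∈ 𝔖, acts distally on Sⁿ. -/

import Mathlib

/-- The normalized ("projective") action of a matrix on `ℝ^m`. -/
noncomputable def nact {m : ℕ} (A : Matrix (Fin m) (Fin m) ℝ)
    (x : EuclideanSpace ℝ (Fin m)) : EuclideanSpace ℝ (Fin m) :=
  ‖Matrix.toEuclideanLin A x‖⁻¹ • Matrix.toEuclideanLin A x

open Filter Topology NormedSpace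

/-- A normed algebra has no small subgroups. -/
theorem eq_one_of_forall_norm_pow_sub_one_le {R : Type*} [NormedRing R] [NormedAlgebra ℝ R]
    {u : R} (h : ∀ m : ℕ, ‖u ^ m - 1‖ ≤ 1 / 2) : u = 1 := by
  have key : ∀ k : ℕ, (3 / 2 : ℝ) ^ k * ‖u - 1‖ ≤ ‖u ^ (2 ^ k) - 1‖ := by
    intro k
    induction k with
    | zero => simp
    | succ k ih =>
      set a := u ^ (2 ^ k) with ha
      have hid : (2 : ℝ) • (a - 1) = (u ^ (2 ^ (k + 1)) - 1) - (a - 1) * (a - 1) := by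
        rw [pow_succ, pow_mul, ← ha, two_smul]; noncomm_ring
      have h1 : ‖(2 : ℝ) • (a - 1)‖ = 2 * ‖a - 1‖ := by
        rw [norm_smul]; norm_num
      have h2 := norm_sub_le (u ^ (2 ^ (k + 1)) - 1) ((a - 1) * (a - 1))
      have h3 := norm_mul_le (a - 1) (a - 1)
      have h4 := h (2 ^ k)
      rw [← hid, h1] at h2
      rw [pow_succ]
      nlinarith [norm_nonneg (a - 1)]
  by_contra hu
  have hpos : 0 < ‖u - 1‖ := norm_pos_iff.2 (sub_ne_zero.2 hu)
  obtain ⟨k, hk⟩ := pow_unbounded_of_one_lt (1 / ‖u - 1‖) (by norm_num : (1 : ℝ) < 3 / 2)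
  rw [div_lt_iff₀ hpos] at hk
  linarith [key k, h (2 ^ k)]

theorem norm_mul_conj_sub_one_le_of_near {R : Type*} [NormedRing R] {a b a' b' : R}
    (ha : a * a' = 1) (hb : b * b' = 1) :
    ‖a * b * a' * b' - 1‖ ≤ 2 * ‖a - 1‖ * ‖b - 1‖ * ‖a'‖ * ‖b'‖ := by
  have h1 : a * b * a' * b' - 1
      = ((a - 1) * (b - 1) - (b - 1) * (a - 1)) * a' * b' := by
    have : ((a - 1) * (b - 1) - (b - 1) * (a - 1)) * a' * b'
        = a * b * a' * b' - b * (a * a') * b' := by noncomm_ring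
    rw [this, ha, mul_one, hb]
  rw [h1]
  calc _ ≤ ‖(a - 1) * (b - 1) - (b - 1) * (a - 1)‖ * ‖a'‖ * ‖b'‖ := norm_mul₃_le
    _ ≤ _ := by
      gcongr
      calc _ ≤ ‖(a - 1) * (b - 1)‖ + ‖(b - 1) * (a - 1)‖ := norm_sub_le _ _
        _ ≤ ‖a - 1‖ * ‖b - 1‖ + ‖b - 1‖ * ‖a - 1‖ := by
          gcongr <;> exact norm_mul_le _ _
        _ = _ := by ring

theorem norm_mul_conj_sub_one_le {R : Type*} [NormedRing R] {a b a' b' : R}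
    (ha : a * a' = 1) (hb : b * b' = 1) :
    ‖a * b * a' * b' - 1‖ ≤ 2 * ‖a - 1‖ * ‖b‖ * ‖a'‖ * ‖b'‖ := by
  have h1 : a * b * a' * b' - 1 = ((a - 1) * b - b * (a - 1)) * a' * b' := by
    have : ((a - 1) * b - b * (a - 1)) * a' * b'
        = a * b * a' * b' - b * (a * a') * b' := by noncomm_ring
    rw [this, ha, mul_one, hb]
  rw [h1]
  calc _ ≤ ‖(a - 1) * b - b * (a - 1)‖ * ‖a'‖ * ‖b'‖ := norm_mul₃_le
    _ ≤ _ := by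
      gcongr
      calc _ ≤ ‖(a - 1) * b‖ + ‖b * (a - 1)‖ := norm_sub_le _ _
        _ ≤ ‖a - 1‖ * ‖b‖ + ‖b‖ * ‖a - 1‖ := by
          gcongr <;> exact norm_mul_le _ _
        _ = _ := by ring

theorem norm_le_two_of_mul_eq_one {R : Type*} [NormedRing R] [NormOneClass R] {a a' : R}
    (h : a * a' = 1) (ha : ‖a - 1‖ ≤ 1 / 2) : ‖a'‖ ≤ 2 := by
  have h1 : a' = 1 - (a - 1) * a' := by rw [sub_mul, h]; noncomm_ring
  have h2 : ‖a'‖ ≤ 1 + ‖a - 1‖ * ‖a'‖ := by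
    calc ‖a'‖ = ‖1 - (a - 1) * a'‖ := by rw [← h1]
      _ ≤ ‖(1 : R)‖ + ‖(a - 1) * a'‖ := norm_sub_le _ _
      _ ≤ _ := by rw [norm_one]; gcongr; exact norm_mul_le _ _
  nlinarith [norm_nonneg a']

section UnitSpan

variable {A B : Type*} [NormedRing A] [NormedAlgebra ℝ A] [NormedRing B] [NormedAlgebra ℝ B]

/-- The linear span of a group of units. -/
noncomputable def unitSpan (G : Subgroup Aˣ) : Submodule ℝ A :=
  Submodule.span ℝ ((fun g : Aˣ => (g : A)) '' (G : Set Aˣ))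

theorem coe_mem_unitSpan {G : Subgroup Aˣ} {g : Aˣ} (hg : g ∈ G) : (g : A) ∈ unitSpan G :=
  Submodule.subset_span ⟨g, hg, rfl⟩

theorem one_mem_unitSpan (G : Subgroup Aˣ) : (1 : A) ∈ unitSpan G :=
  coe_mem_unitSpan G.one_mem

theorem mul_mem_unitSpan {G : Subgroup Aˣ} {a b : A} (ha : a ∈ unitSpan G)
    (hb : b ∈ unitSpan G) : a * b ∈ unitSpan G := by
  have := Submodule.mul_mem_mul ha hb
  unfold unitSpan at this
  rw [Submodule.span_mul_span] at this
  refine Submodule.span_mono ?_ this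
  rintro _ ⟨_, ⟨g, hg, rfl⟩, _, ⟨h, hh, rfl⟩, rfl⟩
  exact ⟨g * h, G.mul_mem hg hh, by simp⟩

/-- `L` is a bounded representation of `G` which is a limit of faithful representations of the
ambient algebra: a semisimplification of the tautological representation. -/
structure IsSemisimplification (G : Subgroup Aˣ) (L : A →ₗ[ℝ] B) (C : ℝ) : Prop where
  bound : ∀ g ∈ G, ‖L (g : A)‖ ≤ C
  approx : ∀ δ > 0, ∃ φ : A →ₐ[ℝ] B, Function.Injective φ ∧
    ∀ a ∈ unitSpan G, ‖φ a - L a‖ ≤ δ * ‖a‖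

namespace IsSemisimplification

variable {G H : Subgroup Aˣ} {L : A →ₗ[ℝ] B} {C : ℝ}

theorem mono (hL : IsSemisimplification G L C) (h : H ≤ G) : IsSemisimplification H L C where
  bound g hg := hL.bound g (h hg)
  approx δ hδ := by
    obtain ⟨φ, hφ, hφL⟩ := hL.approx δ hδ
    exact ⟨φ, hφ, fun a ha => hφL a (Submodule.span_mono (Set.image_mono h) ha)⟩

theorem exists_approx (hL : IsSemisimplification G L C) (R : ℝ) {η : ℝ} (hη : 0 < η) :
    ∃ φ : A →ₐ[ℝ] B, Function.Injective φ ∧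
      ∀ a ∈ unitSpan G, ‖a‖ ≤ R → ‖φ a - L a‖ ≤ η := by
  have hR : 0 < |R| + 1 := by positivity
  obtain ⟨φ, hφ, hφL⟩ := hL.approx (η / (|R| + 1)) (by positivity)
  refine ⟨φ, hφ, fun a ha haR => (hφL a ha).trans ?_⟩
  rw [div_mul_eq_mul_div, div_le_iff₀ hR]
  gcongr
  linarith [le_abs_self R]

theorem exists_tendsto (hL : IsSemisimplification G L C) :
    ∃ φ : ℕ → A →ₐ[ℝ] B, ∀ a ∈ unitSpan G, Tendsto (fun k => φ k a) atTop (𝓝 (L a)) := by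
  choose φ _ hφL using fun k : ℕ => hL.approx (1 / ((k : ℝ) + 1)) (by positivity)
  refine ⟨φ, fun a ha => ?_⟩
  rw [tendsto_iff_norm_sub_tendsto_zero]
  refine squeeze_zero (fun _ => norm_nonneg _) (fun k => hφL k a ha) ?_
  simpa using tendsto_one_div_add_atTop_nhds_zero_nat.mul_const ‖a‖

theorem map_one (hL : IsSemisimplification G L C) : L 1 = 1 := by
  obtain ⟨φ, hφ⟩ := hL.exists_tendsto
  exact tendsto_nhds_unique (hφ 1 (one_mem_unitSpan G)) (by simp)

theorem map_mul (hL : IsSemisimplification G L C) {a b : A} (ha : a ∈ unitSpan G)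
    (hb : b ∈ unitSpan G) : L (a * b) = L a * L b := by
  obtain ⟨φ, hφ⟩ := hL.exists_tendsto
  refine tendsto_nhds_unique (hφ _ (mul_mem_unitSpan ha hb)) ?_
  simpa using (hφ a ha).mul (hφ b hb)

theorem map_mul_map_inv (hL : IsSemisimplification G L C) {g : Aˣ} (hg : g ∈ G) :
    L g * L (g⁻¹ : Aˣ) = 1 := by
  rw [← hL.map_mul (coe_mem_unitSpan hg) (coe_mem_unitSpan (G.inv_mem hg)), Units.mul_inv,
    hL.map_one]

theorem map_inv_mul_map (hL : IsSemisimplification G L C) {g : Aˣ} (hg : g ∈ G) :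
    L (g⁻¹ : Aˣ) * L g = 1 := by
  rw [← hL.map_mul (coe_mem_unitSpan (G.inv_mem hg)) (coe_mem_unitSpan hg), Units.inv_mul,
    hL.map_one]

theorem one_le [NormOneClass B] (hL : IsSemisimplification G L C) : 1 ≤ C := by
  simpa [hL.map_one] using hL.bound 1 G.one_mem

/-- An element of `G` with small image which commutes up to conjugation with `h` commutes
with `h`. -/
theorem commute_of_commute_conj [NormOneClass B] (hL : IsSemisimplification G L C)
    (hG : ∀ g ∈ G, ∃ R, ∀ m : ℕ, ‖((g ^ m : Aˣ) : A)‖ ≤ R) {ε : ℝ} (hε : 0 < ε)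
    (hεC : 8 * ε * (C + 1) ^ 3 ≤ 1) {g h : Aˣ} (hg : g ∈ G) (hh : h ∈ G)
    (hgε : ‖L g - 1‖ ≤ ε) (hcomm : Commute h (g * h * g⁻¹)) : Commute g h := by
  have hC := hL.one_le
  obtain ⟨R₁, hR₁⟩ := hG h hh
  obtain ⟨R₂, hR₂⟩ := hG h⁻¹ (G.inv_mem hh)
  obtain ⟨φ, hφ, hφL⟩ := hL.exists_approx
    (max (max R₁ R₂) (max ‖(g : A)‖ ‖((g⁻¹ : Aˣ) : A)‖)) (lt_min hε one_pos)
  have near : ∀ k ∈ G, ‖(k : A)‖ ≤ max (max R₁ R₂) (max ‖(g : A)‖ ‖((g⁻¹ : Aˣ) : A)‖) →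
      ‖φ k‖ ≤ C + 1 := by
    intro k hk hkR
    have h1 := (hφL k (coe_mem_unitSpan hk) hkR).trans (min_le_right _ _)
    have h2 := norm_le_norm_add_norm_sub' (φ k) (L k)
    linarith [hL.bound k hk]
  have hg1 : ‖φ g - 1‖ ≤ 2 * ε := by
    have h1 := (hφL g (coe_mem_unitSpan hg) (by simp)).trans (min_le_left _ _)
    have h2 := norm_sub_le_norm_sub_add_norm_sub (φ g) (L g) 1
    linarith
  have hu : ∀ m : ℕ, (g * h * g⁻¹ * h⁻¹) ^ m = g * h ^ m * g⁻¹ * (h⁻¹) ^ m := by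
    intro m
    rw [(Commute.inv_right hcomm.symm).mul_pow, conj_pow]
  have hone : φ ((g * h * g⁻¹ * h⁻¹ : Aˣ) : A) = 1 := by
    refine eq_one_of_forall_norm_pow_sub_one_le fun m => ?_
    rw [← _root_.map_pow, ← Units.val_pow_eq_pow_val, hu m]
    simp only [Units.val_mul, _root_.map_mul]
    refine (norm_mul_conj_sub_one_le (by rw [← _root_.map_mul, Units.mul_inv, _root_.map_one])
      (by rw [← _root_.map_mul, inv_pow, Units.mul_inv, _root_.map_one])).trans ?_
    have b1 := near (h ^ m) (G.pow_mem hh m) (by simp only [le_max_iff, hR₁ m, true_or])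
    have b2 := near (h⁻¹ ^ m) (G.pow_mem (G.inv_mem hh) m)
      (by simp only [le_max_iff, hR₂ m, true_or, or_true])
    have b3 := near g⁻¹ (G.inv_mem hg) (by simp)
    calc _ ≤ 2 * (2 * ε) * (C + 1) * (C + 1) * (C + 1) := by gcongr
      _ ≤ 1 / 2 := by nlinarith
  have h1 : g * h * g⁻¹ * h⁻¹ = 1 := Units.ext (hφ (by simpa using hone))
  rw [mul_inv_eq_one, mul_inv_eq_iff_eq_mul] at h1
  exact h1

/-- An element of `G` with power-bounded orbit and trivial image is trivial. -/
theorem eq_one_of_map_eq_one [NormOneClass B] (hL : IsSemisimplification G L C)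
    (hG : ∀ g ∈ G, ∃ R, ∀ m : ℕ, ‖((g ^ m : Aˣ) : A)‖ ≤ R) {g : Aˣ} (hg : g ∈ G)
    (h1 : L g = 1) : g = 1 := by
  obtain ⟨R, hR⟩ := hG g hg
  obtain ⟨φ, hφ, hφL⟩ := hL.exists_approx R (one_half_pos (α := ℝ))
  have hpow : ∀ m : ℕ, L ((g ^ m : Aˣ) : A) = 1 := by
    intro m
    induction m with
    | zero => simpa using hL.map_one
    | succ m ih =>
      rw [pow_succ, Units.val_mul, hL.map_mul (coe_mem_unitSpan (G.pow_mem hg m))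
        (coe_mem_unitSpan hg), ih, h1, mul_one]
  have hone : φ (g : A) = 1 := by
    refine eq_one_of_forall_norm_pow_sub_one_le fun m => ?_
    have := hφL _ (coe_mem_unitSpan (G.pow_mem hg m)) (hR m)
    rwa [hpow, Units.val_pow_eq_pow_val, _root_.map_pow] at this
  exact Units.ext (hφ (by simpa using hone))

/-- `G` is bounded as soon as its elements with image close to `1` are bounded. -/
theorem exists_bound_of_near [FiniteDimensional ℝ B] [NormOneClass B]
    (hL : IsSemisimplification G L C)
    {ε M : ℝ} (hε : 0 < ε) (hM : ∀ g ∈ G, ‖L (g : A) - 1‖ ≤ ε → ‖(g : A)‖ ≤ M) :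
    ∃ M', ∀ g ∈ G, ‖(g : A)‖ ≤ M' := by
  by_contra! hcon
  choose g hg hgn using fun k : ℕ => hcon k
  have hC := hL.one_le
  have := FiniteDimensional.proper_real B
  obtain ⟨b, -, σ, hσ, hlim⟩ := (isCompact_closedBall (0 : B) C).tendsto_subseq
    (x := fun k => L (g k)) (fun k => by simpa using hL.bound _ (hg k))
  obtain ⟨N, hN⟩ := Metric.cauchySeq_iff'.1 hlim.cauchySeq (ε / C) (by positivity)
  have hb : ∀ n ≥ N, ‖(g (σ n) : A)‖ ≤ ‖(g (σ N) : A)‖ * M := by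
    intro n hn
    have hw := hM ((g (σ N))⁻¹ * g (σ n)) (G.mul_mem (G.inv_mem (hg _)) (hg _)) (by
      rw [Units.val_mul, hL.map_mul (coe_mem_unitSpan (G.inv_mem (hg _)))
        (coe_mem_unitSpan (hg _)), ← hL.map_inv_mul_map (hg (σ N)), ← mul_sub]
      have h1 := hN n hn
      rw [dist_eq_norm] at h1
      calc _ ≤ ‖L ((g (σ N))⁻¹ : Aˣ)‖ * ‖L (g (σ n)) - L (g (σ N))‖ := norm_mul_le _ _
        _ ≤ C * (ε / C) := by
          gcongr
          · exact hL.bound _ (G.inv_mem (hg _))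
          · exact h1.le
        _ = ε := by field_simp)
    calc ‖(g (σ n) : A)‖ = ‖(g (σ N) : A) * ((g (σ N))⁻¹ * g (σ n) : Aˣ)‖ := by
          rw [← Units.val_mul, mul_inv_cancel_left]
      _ ≤ _ := (norm_mul_le _ _).trans (by gcongr)
  obtain ⟨m, hm⟩ := exists_nat_gt (‖(g (σ N) : A)‖ * M)
  have h1 := hb (max m N) (le_max_right _ _)
  have h2 := hgn (σ (max m N))
  have h3 : ((max m N : ℕ) : ℝ) ≤ (σ (max m N) : ℕ) := by exact_mod_cast hσ.id_le _
  have h4 : (m : ℝ) ≤ ((max m N : ℕ) : ℝ) := by exact_mod_cast le_max_left _ _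
  linarith

/-- If a neighbourhood of `1` in `G` is central, then the elements of `G` with image close to `1`
commute. -/
theorem commute_of_near [FiniteDimensional ℝ A] [NormOneClass B]
    (hL : IsSemisimplification G L C)
    (hG : ∀ g ∈ G, ∃ R, ∀ m : ℕ, ‖((g ^ m : Aˣ) : A)‖ ≤ R) {ε : ℝ} (hε : 0 < ε)
    (hεC : 8 * ε * (C + 1) ^ 3 ≤ 1)
    {r : ℝ} (hr : 0 < r) (hcen : ∀ g ∈ G, ‖(g : A) - 1‖ < r → ∀ h ∈ G, Commute g h)
    {g h : Aˣ} (hg : g ∈ G) (hh : h ∈ G)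
    (hgε : ‖L g - 1‖ ≤ ε) (hhε : ‖L h - 1‖ ≤ ε) : Commute g h := by
  have hC := hL.one_le
  obtain ⟨c, hc0, hcs⟩ : ∃ c : ℕ → Aˣ, c 0 = g ∧
      ∀ k, c (k + 1) = c k * h * (c k)⁻¹ * h⁻¹ :=
    ⟨fun k => Nat.rec g (fun _ x => x * h * x⁻¹ * h⁻¹) k, rfl, fun _ => rfl⟩
  have hcG : ∀ k, c k ∈ G := by
    intro k
    induction k with
    | zero => rwa [hc0]
    | succ k ih =>
      rw [hcs]
      exact G.mul_mem (G.mul_mem (G.mul_mem ih hh) (G.inv_mem ih)) (G.inv_mem hh)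
  have hε2 : 8 * ε * (C + 1) ≤ 1 / 2 := by
    nlinarith [mul_pos hε (by linarith : 0 < C + 1), mul_self_nonneg (C + 1)]
  have hcL : ∀ k, ‖L (c k : A) - 1‖ ≤ ε := by
    intro k
    induction k with
    | zero => rwa [hc0]
    | succ k ih =>
      have e : L (c (k + 1) : A) = L (c k : A) * L h * L ((c k)⁻¹ : Aˣ) * L (h⁻¹ : Aˣ) := by
        have m1 := coe_mem_unitSpan (hcG k)
        have m2 := coe_mem_unitSpan hh
        have m3 := coe_mem_unitSpan (G.inv_mem (hcG k))
        have m4 := coe_mem_unitSpan (G.inv_mem hh)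
        rw [hcs]
        simp only [Units.val_mul]
        rw [hL.map_mul (mul_mem_unitSpan (mul_mem_unitSpan m1 m2) m3) m4,
          hL.map_mul (mul_mem_unitSpan m1 m2) m3, hL.map_mul m1 m2]
      rw [e]
      refine (norm_mul_conj_sub_one_le_of_near (hL.map_mul_map_inv (hcG k))
        (hL.map_mul_map_inv hh)).trans ?_
      have b1 := hL.bound _ (G.inv_mem (hcG k))
      have b2 := hL.bound _ (G.inv_mem hh)
      calc _ ≤ 2 * ε * ε * C * C := by gcongr
        _ = ε * (2 * ε * C ^ 2) := by ring
        _ ≤ ε * 1 := by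
          gcongr
          refine le_trans ?_ hεC
          nlinarith [mul_pos hε (by linarith : 0 < C), pow_pos (by linarith : 0 < C) 3,
            mul_pos hε (pow_pos (by linarith : 0 < C) 3),
            mul_pos hε (pow_pos (by linarith : 0 < C) 2)]
        _ = ε := mul_one _
  obtain ⟨φ, hφ, hφL⟩ := hL.exists_approx
    (max ‖(g : A)‖ (max ‖(h : A)‖ ‖((h⁻¹ : Aˣ) : A)‖)) (lt_min hε one_pos)
  have near1 : ∀ k ∈ G, ‖(k : A)‖ ≤ max ‖(g : A)‖ (max ‖(h : A)‖ ‖((h⁻¹ : Aˣ) : A)‖) →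
      ‖L k - 1‖ ≤ ε → ‖φ k - 1‖ ≤ 2 * ε := by
    intro k hk hkR hkε
    have h1 := (hφL k (coe_mem_unitSpan hk) hkR).trans (min_le_left _ _)
    have h2 := norm_sub_le_norm_sub_add_norm_sub (φ k) (L k) 1
    linarith
  have hg1 := near1 g hg (by simp) hgε
  have hh1 := near1 h hh (by simp) hhε
  have hh2 : ‖φ (h⁻¹ : Aˣ)‖ ≤ C + 1 := by
    have h1 := (hφL _ (coe_mem_unitSpan (G.inv_mem hh)) (by simp)).trans (min_le_right _ _)
    have h2 := norm_le_norm_add_norm_sub' (φ (h⁻¹ : Aˣ)) (L (h⁻¹ : Aˣ))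
    linarith [hL.bound _ (G.inv_mem hh)]
  have hinv : ∀ k : Aˣ, φ k * φ (k⁻¹ : Aˣ) = 1 := fun k => by
    rw [← _root_.map_mul, Units.mul_inv, _root_.map_one]
  have hdecay : ∀ k, ‖φ (c k) - 1‖ ≤ 2 * ε * (1 / 2) ^ k := by
    intro k
    induction k with
    | zero => simpa [hc0] using hg1
    | succ k ih =>
      have hsmall : ‖φ (c k) - 1‖ ≤ 1 / 2 := by
        refine ih.trans ?_
        have : ((1 : ℝ) / 2) ^ k ≤ 1 := pow_le_one₀ (by norm_num) (by norm_num)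
        nlinarith
      rw [hcs]
      simp only [Units.val_mul, _root_.map_mul]
      refine (norm_mul_conj_sub_one_le_of_near (hinv _) (hinv _)).trans ?_
      have b := norm_le_two_of_mul_eq_one (hinv (c k)) hsmall
      calc _ ≤ 2 * (2 * ε * (1 / 2) ^ k) * (2 * ε) * 2 * (C + 1) := by gcongr
        _ = (2 * ε * (1 / 2) ^ k) * (8 * ε * (C + 1)) := by ring
        _ ≤ (2 * ε * (1 / 2) ^ k) * (1 / 2) := by gcongr
        _ = _ := by rw [pow_succ]; ring
  obtain ⟨K, hK, hKφ⟩ := φ.toLinearMap.exists_antilipschitzWith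
    (LinearMap.ker_eq_bot.2 hφ)
  have hclose : ∀ k, ‖(c k : A) - 1‖ ≤ K * (2 * ε * (1 / 2) ^ k) := by
    intro k
    have := hKφ.le_mul_dist (c k : A) 1
    rw [dist_eq_norm, dist_eq_norm] at this
    refine this.trans ?_
    gcongr
    simpa using hdecay k
  have htend : Tendsto (fun k : ℕ => (K : ℝ) * (2 * ε * (1 / 2) ^ k)) atTop (𝓝 0) := by
    simpa using ((tendsto_pow_atTop_nhds_zero_of_lt_one (by norm_num : (0 : ℝ) ≤ 1 / 2)
      (by norm_num)).const_mul (2 * ε)).const_mul (K : ℝ)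
  obtain ⟨N, hN⟩ := (htend.eventually (gt_mem_nhds hr)).exists
  have hcN : Commute (c N) h := hcen _ (hcG N) ((hclose N).trans_lt hN) h hh
  have hdesc : ∀ k, Commute (c (k + 1)) h → Commute (c k) h := by
    intro k hk
    refine hL.commute_of_commute_conj hG hε hεC (hcG k) hh (hcL k) ?_
    have : c k * h * (c k)⁻¹ = c (k + 1) * h := by rw [hcs]; group
    rw [this]
    exact hk.symm.mul_right (Commute.refl h)
  have : ∀ k, Commute (c k) h → Commute (c 0) h := by
    intro k
    induction k with
    | zero => exact id
    | succ k ih => exact fun hk => ih (hdesc k hk)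
  exact hc0 ▸ this N hcN

end IsSemisimplification

end UnitSpan

section ExpUnit

variable {A : Type*} [NormedRing A] [NormedAlgebra ℝ A] [CompleteSpace A]

theorem exp_mul_exp_neg_eq_one (X : A) : exp X * exp (-X) = 1 := by
  let _ := NormedAlgebra.restrictScalars ℚ ℝ A
  rw [← exp_add_of_commute (Commute.neg_right (Commute.refl X)), add_neg_cancel, exp_zero]

/-- The exponential as a unit. -/
noncomputable def expUnit (X : A) : Aˣ where
  val := exp X
  inv := exp (-X)
  val_inv := exp_mul_exp_neg_eq_one X
  inv_val := by simpa using exp_mul_exp_neg_eq_one (-X)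

theorem expUnit_zero : expUnit (0 : A) = 1 := Units.ext exp_zero

theorem expUnit_neg (X : A) : expUnit (-X) = (expUnit X)⁻¹ := by
  ext; rfl

theorem expUnit_nsmul (m : ℕ) (X : A) : expUnit (m • X) = expUnit X ^ m := by
  let _ := NormedAlgebra.restrictScalars ℚ ℝ A
  exact Units.ext (by simpa using! exp_nsmul m X)

theorem expUnit_conj (g : Aˣ) (X : A) :
    expUnit ((g : A) * X * (g⁻¹ : Aˣ)) = g * expUnit X * g⁻¹ := by
  let _ := NormedAlgebra.restrictScalars ℚ ℝ A
  exact Units.ext (by simpa using! exp_units_conj g X)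

theorem continuous_expUnit_coe : Continuous fun X : A => (expUnit X : A) := by
  let _ := NormedAlgebra.restrictScalars ℚ ℝ A
  exact exp_continuous

theorem hasStrictFDerivAt_expUnit_coe_zero :
    HasStrictFDerivAt (fun X : A => (expUnit X : A)) (1 : A →L[ℝ] A) 0 :=
  hasStrictFDerivAt_exp_zero

theorem hasDerivAt_expUnit_smul_zero (X : A) :
    HasDerivAt (fun t : ℝ => (expUnit (t • X) : A)) X 0 := by
  simpa using! hasDerivAt_exp_smul_const (𝕂 := ℝ) X (0 : ℝ)

/-- Two one-parameter groups agree only if their generators do. -/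
theorem eq_of_forall_expUnit_smul_eq {X Y : A}
    (h : ∀ t : ℝ, expUnit (t • X) = expUnit (t • Y)) : X = Y :=
  (hasDerivAt_expUnit_smul_zero X).unique (by
    simpa only [h] using hasDerivAt_expUnit_smul_zero Y)

theorem commute_of_forall_commute_expUnit {X : A} {g : Aˣ}
    (h : ∀ t : ℝ, Commute g (expUnit (t • X))) : (g : A) * X = X * g := by
  have : (g : A) * X * (g⁻¹ : Aˣ) = X := by
    refine eq_of_forall_expUnit_smul_eq fun t => ?_
    rw [← smul_mul_assoc, ← mul_smul_comm, expUnit_conj, (h t).eq, mul_inv_cancel_right]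
  calc (g : A) * X = (g : A) * X * (g⁻¹ : Aˣ) * g := by rw [mul_assoc _ _ (g : A)]; simp
    _ = X * g := by rw [this]

theorem commute_expUnit_of_commute {X : A} {g : Aˣ} (h : (g : A) * X = X * g) :
    Commute g (expUnit X) := by
  have h1 : (g : A) * X * (g⁻¹ : Aˣ) = X := by rw [h, mul_assoc]; simp
  have h2 := expUnit_conj g X
  rw [h1, eq_mul_inv_iff_mul_eq] at h2
  exact h2.symm

end ExpUnit

section LieAlgebra

variable {A : Type*} [NormedRing A]

/-- The set of elements of a group of units. -/
def unitSet (G : Subgroup Aˣ) : Set A := (fun g : Aˣ => (g : A)) '' (G : Set Aˣ)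

theorem mem_of_tendsto_unit {G : Subgroup Aˣ} (hcl : IsClosed (unitSet G)) {α : Type*}
    {l : Filter α} [l.NeBot] {g : α → Aˣ} {u : Aˣ} (hg : ∀ᶠ k in l, g k ∈ G)
    (hlim : Tendsto (fun k => (g k : A)) l (𝓝 (u : A))) : u ∈ G := by
  obtain ⟨v, hv, hvu⟩ := hcl.mem_of_tendsto hlim (hg.mono fun k hk => ⟨g k, hk, rfl⟩)
  rwa [← Units.ext hvu]

variable [NormedAlgebra ℝ A] [CompleteSpace A]

/-- A limit direction of logarithms of elements of a closed group generates a one-parameter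
subgroup. -/
theorem expUnit_smul_mem_of_tendsto {G : Subgroup Aˣ} (hcl : IsClosed (unitSet G)) {α : Type*}
    {l : Filter α} [l.NeBot] {Y : α → A} {r : α → ℝ} {X : A}
    (hY : ∀ᶠ k in l, expUnit (Y k) ∈ G) (hr : Tendsto r l atTop)
    (hlim : Tendsto (fun k => r k • Y k) l (𝓝 X)) (t : ℝ) : expUnit (t • X) ∈ G := by
  have pos : ∀ t : ℝ, 0 ≤ t → expUnit (t • X) ∈ G := by
    intro t ht
    have hfloor : Tendsto (fun k => (⌊t * r k⌋₊ / r k : ℝ)) l (𝓝 t) :=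
      (tendsto_nat_floor_mul_div_atTop ht).comp hr
    have h1 : Tendsto (fun k => ⌊t * r k⌋₊ • Y k) l (𝓝 (t • X)) := by
      refine (hfloor.smul hlim).congr' ?_
      filter_upwards [hr.eventually_gt_atTop 0] with k hk
      rw [smul_smul, div_mul_cancel₀ _ hk.ne', Nat.cast_smul_eq_nsmul]
    refine mem_of_tendsto_unit hcl (g := fun k => expUnit (⌊t * r k⌋₊ • Y k)) (l := l) ?_
      ((continuous_expUnit_coe.tendsto _).comp h1)
    filter_upwards [hY] with k hk
    rw [expUnit_nsmul]
    exact G.pow_mem hk _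
  rcases le_total 0 t with ht | ht
  · exact pos t ht
  · have := G.inv_mem (pos (-t) (by linarith))
    rwa [← expUnit_neg, neg_smul, neg_neg] at this

theorem expUnit_smul_mem_of_tendsto_sub_one {G : Subgroup Aˣ} (hcl : IsClosed (unitSet G))
    {α : Type*} {l : Filter α} [l.NeBot] {g : α → Aˣ} {r : α → ℝ} {X : A}
    (hg : ∀ᶠ k in l, g k ∈ G) (hr : Tendsto r l atTop)
    (hlim : Tendsto (fun k => r k • ((g k : A) - 1)) l (𝓝 X)) (t : ℝ) : expUnit (t • X) ∈ G := by
  have hder : HasStrictFDerivAt (fun X : A => (expUnit X : A))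
      ((ContinuousLinearEquiv.refl ℝ A : A ≃L[ℝ] A) : A →L[ℝ] A) 0 :=
    hasStrictFDerivAt_expUnit_coe_zero
  have hinv := hder.to_localInverse
  have hright := hder.eventually_right_inverse
  simp only [expUnit_zero, Units.val_one] at hinv hright
  have hlog1 : hder.localInverse _ _ _ 1 = 0 := by
    have := hder.localInverse_apply_image
    simpa [expUnit_zero] using this
  have hd : Tendsto (fun k => (g k : A) - 1) l (𝓝 0) := by
    have h1 := (tendsto_inv_atTop_zero.comp hr).smul hlim
    rw [zero_smul] at h1
    refine h1.congr' ?_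
    filter_upwards [hr.eventually_gt_atTop 0] with k hk
    simp [smul_smul, inv_mul_cancel₀ hk.ne']
  have hg1 : Tendsto (fun k => (g k : A)) l (𝓝 1) := by simpa using hd.add_const 1
  have h2 := hinv.hasFDerivAt.hasFDerivWithinAt.lim (s := Set.univ) hd (by simp) hlim
  simp only [add_sub_cancel, hlog1, sub_zero] at h2
  refine expUnit_smul_mem_of_tendsto hcl (l := l)
    (Y := fun k => hder.localInverse _ _ _ (g k : A)) ?_ hr (by simpa using! h2) t
  filter_upwards [hg, hg1.eventually hright] with k hk1 hk2
  rwa [Units.ext hk2]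

/-- The Lie algebra of a closed group of units. -/
noncomputable def lieAlgebraOf (G : Subgroup Aˣ) (hcl : IsClosed (unitSet G)) :
    Submodule ℝ A where
  carrier := {X | ∀ t : ℝ, expUnit (t • X) ∈ G}
  zero_mem' t := by rw [smul_zero, expUnit_zero]; exact G.one_mem
  smul_mem' c X hX t := by rw [smul_smul]; exact hX _
  add_mem' := by
    intro X Y hX hY
    have hder : HasDerivAt (fun t : ℝ => (expUnit (t • X) * expUnit (t • Y) : A)) (X + Y) 0 := by
      simpa [expUnit_zero] using!
        (hasDerivAt_expUnit_smul_zero X).mul (hasDerivAt_expUnit_smul_zero Y)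
    have hs := hder.tendsto_slope_zero_right
    refine expUnit_smul_mem_of_tendsto_sub_one hcl (l := 𝓝[>] (0 : ℝ))
      (g := fun t => expUnit (t • X) * expUnit (t • Y))
      (r := fun t => t⁻¹) (Eventually.of_forall fun t => G.mul_mem (hX t) (hY t))
      tendsto_inv_nhdsGT_zero ?_
    simpa [expUnit_zero] using hs

variable {G : Subgroup Aˣ} {hcl : IsClosed (unitSet G)}

theorem expUnit_mem_of_mem_lieAlgebraOf {X : A} (hX : X ∈ lieAlgebraOf G hcl) :
    expUnit X ∈ G := by simpa using hX 1

theorem conj_mem_lieAlgebraOf {X : A} (hX : X ∈ lieAlgebraOf G hcl) {g : Aˣ} (hg : g ∈ G) :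
    (g : A) * X * (g⁻¹ : Aˣ) ∈ lieAlgebraOf G hcl := by
  intro t
  rw [← smul_mul_assoc, ← mul_smul_comm, expUnit_conj]
  exact G.mul_mem (G.mul_mem hg (hX t)) (G.inv_mem hg)

theorem hasDerivAt_conj_expUnit (X Y : A) :
    HasDerivAt (fun t : ℝ => (expUnit (t • X) * Y * expUnit (-(t • X)) : A)) (X * Y - Y * X) 0 := by
  have h1 := (hasDerivAt_expUnit_smul_zero X).mul_const Y
  have h2 := hasDerivAt_expUnit_smul_zero (-X)
  simp only [smul_neg] at h2
  have h3 := h1.mul h2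
  simpa [expUnit_zero, sub_eq_add_neg] using! h3

theorem lie_mem_lieAlgebraOf [FiniteDimensional ℝ A] {X Y : A} (hX : X ∈ lieAlgebraOf G hcl)
    (hY : Y ∈ lieAlgebraOf G hcl) : X * Y - Y * X ∈ lieAlgebraOf G hcl := by
  have hs := (hasDerivAt_conj_expUnit X Y).tendsto_slope_zero_right
  refine (Submodule.closed_of_finiteDimensional (lieAlgebraOf G hcl)).mem_of_tendsto hs
    (Eventually.of_forall fun t => ?_)
  refine Submodule.smul_mem _ _ (Submodule.sub_mem _ ?_ ?_)
  · rw [expUnit_neg]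
    exact conj_mem_lieAlgebraOf hY (hX _)
  · simpa [expUnit_zero] using hY

theorem mem_unitSpan_of_mem_lieAlgebraOf [FiniteDimensional ℝ A] {X : A}
    (hX : X ∈ lieAlgebraOf G hcl) : X ∈ unitSpan G := by
  have hs := (hasDerivAt_expUnit_smul_zero X).tendsto_slope_zero_right
  refine (Submodule.closed_of_finiteDimensional (unitSpan G)).mem_of_tendsto hs
    (Eventually.of_forall fun t => ?_)
  exact Submodule.smul_mem _ _ (Submodule.sub_mem _ (coe_mem_unitSpan (hX _))
    (coe_mem_unitSpan (by simpa using hX 0)))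

end LieAlgebra

section LocalStructure

variable {A : Type*} [NormedRing A] [NormedAlgebra ℝ A] [CompleteSpace A] [FiniteDimensional ℝ A]
  {G : Subgroup Aˣ} {hcl : IsClosed (unitSet G)}

/-- A complement of the Lie algebra contains no small logarithms of elements of the group. -/
theorem eventually_eq_zero_of_expUnit_mem {m : Submodule ℝ A}
    (hm : Disjoint (lieAlgebraOf G hcl) m) :
    ∀ᶠ Y : m in 𝓝 0, expUnit (Y : A) ∈ G → Y = 0 := by
  by_contra hcon
  rw [not_eventually] at hcon
  obtain ⟨l, hl⟩ := exists_ultrafilter_iff.2 (frequently_iff_neBot.1 hcon)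
  have hl0 : Tendsto (fun Y : m => (Y : A)) l (𝓝 0) := by
    have : Tendsto (fun Y : m => (Y : A)) (𝓝 0) (𝓝 ((0 : m) : A)) :=
      continuous_subtype_val.tendsto 0
    exact this.mono_left (hl.trans inf_le_left)
  have hlP : ∀ᶠ Y : m in l, expUnit (Y : A) ∈ G ∧ Y ≠ 0 := by
    have : ∀ᶠ Y : m in l, ¬(expUnit (Y : A) ∈ G → Y = 0) :=
      (le_principal_iff.1 (hl.trans inf_le_right))
    exact this.mono fun Y hY => by simpa using hY
  have hproper := FiniteDimensional.proper_real A
  obtain ⟨X, hX, hlX⟩ := (isCompact_sphere (0 : A) 1).ultrafilter_le_nhds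
    (l.map fun Y : m => ‖(Y : A)‖⁻¹ • (Y : A)) (by
      rw [le_principal_iff]
      change ∀ᶠ Y : m in l, ‖(Y : A)‖⁻¹ • (Y : A) ∈ Metric.sphere (0 : A) 1
      filter_upwards [hlP] with Y hY
      have : (Y : A) ≠ 0 := by simpa using hY.2
      simp [norm_smul, this])
  have hlX' : Tendsto (fun Y : m => ‖(Y : A)‖⁻¹ • (Y : A)) l (𝓝 X) := hlX
  have hr : Tendsto (fun Y : m => ‖(Y : A)‖⁻¹) l atTop := by
    refine tendsto_inv_nhdsGT_zero.comp (tendsto_nhdsWithin_iff.2 ⟨by simpa using hl0.norm, ?_⟩)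
    filter_upwards [hlP] with Y hY
    simpa using hY.2
  have hXg : X ∈ lieAlgebraOf G hcl :=
    fun t => expUnit_smul_mem_of_tendsto hcl (hlP.mono fun Y hY => hY.1) hr hlX' t
  have hXm : X ∈ m := m.closed_of_finiteDimensional.mem_of_tendsto hlX'
    (Eventually.of_forall fun Y => m.smul_mem _ Y.2)
  have := Submodule.disjoint_def.1 hm X hXg hXm
  simp [this] at hX

/-- If the Lie algebra is centralized by the group, then a neighbourhood of `1` is central. -/
theorem exists_commute_of_near_one
    (hcomm : ∀ X ∈ lieAlgebraOf G hcl, ∀ g ∈ G, (g : A) * X = X * g) :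
    ∃ r > 0, ∀ g ∈ G, ‖(g : A) - 1‖ < r → ∀ h ∈ G, Commute g h := by
  obtain ⟨m, hm⟩ := (lieAlgebraOf G hcl).exists_isCompl
  set 𝔤 := lieAlgebraOf G hcl
  let F : 𝔤 × m → A := fun p => expUnit (p.1 : A) * expUnit (p.2 : A)
  let F' : 𝔤 × m →L[ℝ] A :=
    (𝔤.subtypeL.comp (ContinuousLinearMap.fst ℝ 𝔤 m)) +
      (m.subtypeL.comp (ContinuousLinearMap.snd ℝ 𝔤 m))
  have hF : HasStrictFDerivAt F F' 0 := by
    have h1 : HasStrictFDerivAt (fun p : 𝔤 × m => (expUnit (p.1 : A) : A))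
        ((1 : A →L[ℝ] A).comp (𝔤.subtypeL.comp (ContinuousLinearMap.fst ℝ 𝔤 m))) 0 :=
      HasStrictFDerivAt.comp (0 : 𝔤 × m) (g := fun X : A => (expUnit X : A))
        (by simpa using hasStrictFDerivAt_expUnit_coe_zero)
        (𝔤.subtypeL.comp (ContinuousLinearMap.fst ℝ 𝔤 m)).hasStrictFDerivAt
    have h2 : HasStrictFDerivAt (fun p : 𝔤 × m => (expUnit (p.2 : A) : A))
        ((1 : A →L[ℝ] A).comp (m.subtypeL.comp (ContinuousLinearMap.snd ℝ 𝔤 m))) 0 :=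
      HasStrictFDerivAt.comp (0 : 𝔤 × m) (g := fun X : A => (expUnit X : A))
        (by simpa using hasStrictFDerivAt_expUnit_coe_zero)
        (m.subtypeL.comp (ContinuousLinearMap.snd ℝ 𝔤 m)).hasStrictFDerivAt
    refine (h1.mul' h2).congr_fderiv ?_
    ext p <;> simp [F', expUnit_zero]
  have hsurj : F'.range = ⊤ := by
    rw [eq_top_iff]
    intro a _
    have : a ∈ 𝔤 ⊔ m := by rw [hm.sup_eq_top]; trivial
    obtain ⟨X, hX, Y, hY, rfl⟩ := Submodule.mem_sup.1 this
    exact ⟨(⟨X, hX⟩, ⟨Y, hY⟩), by simp [F']⟩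
  have hmap := hF.map_nhds_eq_of_surj hsurj
  have hF0 : F 0 = 1 := by simp [F, expUnit_zero]
  rw [hF0] at hmap
  have hev : ∀ᶠ a in 𝓝 (1 : A), ∀ g ∈ G, (g : A) = a → ∀ h ∈ G, Commute g h := by
    rw [← hmap, eventually_map]
    have h2 : Tendsto (fun p : 𝔤 × m => p.2) (𝓝 0) (𝓝 0) := by
      have : Continuous (fun p : 𝔤 × m => p.2) := continuous_snd
      simpa using this.tendsto 0
    filter_upwards [h2.eventually (eventually_eq_zero_of_expUnit_mem (hcl := hcl) hm.disjoint)]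
      with p hp g hg hgp h hh
    have hg' : g = expUnit (p.1 : A) * expUnit (p.2 : A) := Units.ext hgp
    have h1 : expUnit (p.1 : A) ∈ G := expUnit_mem_of_mem_lieAlgebraOf p.1.2
    have h3 : expUnit (p.2 : A) ∈ G := by
      rw [hg', G.mul_mem_cancel_left h1] at hg
      exact hg
    rw [hg', hp h3]
    simp only [ZeroMemClass.coe_zero, expUnit_zero, mul_one]
    exact (commute_expUnit_of_commute (hcomm _ p.1.2 h hh)).symm
  obtain ⟨r, hr, hball⟩ := Metric.eventually_nhds_iff.1 hev
  exact ⟨r, hr, fun g hg hgr => hball (by rwa [dist_eq_norm]) g hg rfl⟩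

end LocalStructure

section Elliptic

variable {A B : Type*} [NormedRing A] [NormedAlgebra ℝ A] [NormedRing B] [NormedAlgebra ℝ B]
  [CompleteSpace A]

theorem hasDerivAt_expUnit_smul (X : A) (t : ℝ) :
    HasDerivAt (fun t : ℝ => (expUnit (t • X) : A)) (expUnit (t • X) * X) t :=
  hasDerivAt_exp_smul_const (𝕂 := ℝ) X t

/-- If `X` generates a bounded group then `ad X` has no nilpotent part. -/
theorem lie_eq_zero_of_lie_lie_eq_zero {X Y : A} {R R' : ℝ}
    (hR : ∀ m : ℕ, ‖((expUnit X ^ m : Aˣ) : A)‖ ≤ R)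
    (hR' : ∀ m : ℕ, ‖(((expUnit X)⁻¹ ^ m : Aˣ) : A)‖ ≤ R')
    (h : X * (X * Y - Y * X) = (X * Y - Y * X) * X) : X * Y - Y * X = 0 := by
  set Z := X * Y - Y * X with hZ
  have hcomm : ∀ t : ℝ, (expUnit (t • X) : A) * Z = Z * expUnit (t • X) := fun t =>
    ((Commute.smul_left h t).exp_left :)
  have hderiv : ∀ t : ℝ, HasDerivAt
      (fun t : ℝ => (expUnit (t • X) : A) * Y * expUnit (t • (-X)) - t • Z) 0 t := by
    intro t
    have h1 := (((hasDerivAt_expUnit_smul X t).mul_const Y).mul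
      (hasDerivAt_expUnit_smul (-X) t)).sub ((hasDerivAt_id t).smul_const Z)
    refine h1.congr_deriv ?_
    have e : (expUnit (t • X) : A) * expUnit (t • (-X)) = 1 := by
      rw [smul_neg, expUnit_neg, Units.mul_inv]
    have e2 : (expUnit (t • (-X)) : A) * (-X) = (-X) * expUnit (t • (-X)) :=
      ((Commute.smul_left (Commute.refl (-X)) t).exp_left :)
    rw [e2]
    calc _ = (expUnit (t • X) : A) * Z * expUnit (t • (-X)) - Z := by
          simp only [one_smul, hZ]; noncomm_ring
      _ = 0 := by rw [hcomm, mul_assoc, e, mul_one, sub_self]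
  have hconst : ∀ t : ℝ, (expUnit (t • X) : A) * Y * expUnit (t • (-X)) - t • Z = Y := by
    intro t
    have := is_const_of_deriv_eq_zero (fun t => (hderiv t).differentiableAt)
      (fun t => (hderiv t).deriv) t 0
    simpa [expUnit_zero] using this
  by_contra hne
  have hpos : 0 < ‖Z‖ := norm_pos_iff.2 hne
  obtain ⟨m, hm⟩ := exists_nat_gt ((R * ‖Y‖ * R' + ‖Y‖) / ‖Z‖)
  rw [div_lt_iff₀ hpos] at hm
  have h1 := hconst m
  rw [smul_neg, expUnit_neg, Nat.cast_smul_eq_nsmul, expUnit_nsmul, ← inv_pow] at h1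
  have h2 : (m : ℝ) • Z = ((expUnit X ^ m : Aˣ) : A) * Y * ((expUnit X)⁻¹ ^ m : Aˣ) - Y := by
    rw [eq_sub_iff_add_eq, add_comm]
    exact (sub_eq_iff_eq_add.1 h1).symm
  have h3 : ‖(m : ℝ) • Z‖ ≤ R * ‖Y‖ * R' + ‖Y‖ := by
    rw [h2]
    refine (norm_sub_le _ _).trans ?_
    gcongr
    refine norm_mul₃_le.trans ?_
    gcongr
    · exact mul_nonneg ((norm_nonneg _).trans (hR 0)) (norm_nonneg _)
    · exact hR m
    · exact hR' m
  rw [norm_smul, Real.norm_natCast] at h3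
  linarith

/-- A semisimplification of an elliptic group is injective on the Lie algebra. -/
theorem IsSemisimplification.eq_zero_of_map_eq_zero [FiniteDimensional ℝ A] [NormOneClass B]
    {G : Subgroup Aˣ} {L : A →ₗ[ℝ] B} {C : ℝ}
    (hL : IsSemisimplification G L C) {hcl : IsClosed (unitSet G)}
    (hG : ∀ g ∈ G, ∃ R, ∀ m : ℕ, ‖((g ^ m : Aˣ) : A)‖ ≤ R) {X : A}
    (hX : X ∈ lieAlgebraOf G hcl) (h0 : L X = 0) : X = 0 := by
  have hderiv : ∀ t : ℝ, HasDerivAt (fun t : ℝ => L (expUnit (t • X) : A)) 0 t := by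
    intro t
    have h1 := (LinearMap.toContinuousLinearMap L).hasFDerivAt.comp_hasDerivAt t
      (hasDerivAt_expUnit_smul X t)
    refine h1.congr_deriv ?_
    simp [hL.map_mul (coe_mem_unitSpan (hX t)) (mem_unitSpan_of_mem_lieAlgebraOf hX), h0]
  refine eq_of_forall_expUnit_smul_eq fun t => ?_
  rw [smul_zero, expUnit_zero]
  refine hL.eq_one_of_map_eq_one hG (hX t) ?_
  have := is_const_of_deriv_eq_zero (fun t => (hderiv t).differentiableAt)
      (fun t => (hderiv t).deriv) t 0
  simpa [expUnit_zero, hL.map_one] using this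

end Elliptic

section Centralizer

variable {A : Type*} [NormedRing A]

/-- The centralizer of `X` in `G`. -/
def centralizerIn (G : Subgroup Aˣ) (X : A) : Subgroup Aˣ where
  carrier := {g | g ∈ G ∧ (g : A) * X = X * g}
  one_mem' := ⟨G.one_mem, by simp⟩
  mul_mem' := by
    rintro a b ⟨ha, ha'⟩ ⟨hb, hb'⟩
    exact ⟨G.mul_mem ha hb, by rw [Units.val_mul, mul_assoc, hb', ← mul_assoc, ha', mul_assoc]⟩
  inv_mem' := by
    rintro a ⟨ha, ha'⟩
    exact ⟨G.inv_mem ha, (Commute.units_inv_left ha' :)⟩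

theorem centralizerIn_le (G : Subgroup Aˣ) (X : A) : centralizerIn G X ≤ G := fun _ hg => hg.1

theorem isClosed_unitSet_centralizerIn {G : Subgroup Aˣ} (hcl : IsClosed (unitSet G)) (X : A) :
    IsClosed (unitSet (centralizerIn G X)) := by
  have : unitSet (centralizerIn G X) = unitSet G ∩ {a | a * X = X * a} := by
    ext a
    constructor
    · rintro ⟨g, hg, rfl⟩
      exact ⟨⟨g, hg.1, rfl⟩, hg.2⟩
    · rintro ⟨⟨g, hg, rfl⟩, h⟩
      exact ⟨g, ⟨hg, h⟩, rfl⟩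
  rw [this]
  exact hcl.inter (isClosed_eq (by fun_prop) (by fun_prop))

variable [NormedAlgebra ℝ A]

theorem commute_of_mem_unitSpan_centralizerIn {G : Subgroup Aˣ} {X a : A}
    (ha : a ∈ unitSpan (centralizerIn G X)) : a * X = X * a := by
  induction ha using Submodule.span_induction with
  | mem x hx => obtain ⟨g, hg, rfl⟩ := hx; exact hg.2
  | zero => simp
  | add x y _ _ hx hy => rw [add_mul, mul_add, hx, hy]
  | smul c x _ hx => rw [smul_mul_assoc, mul_smul_comm, hx]

variable [FiniteDimensional ℝ A]

theorem finrank_unitSpan_centralizerIn_lt {G : Subgroup Aˣ} {X : A} {g : Aˣ} (hg : g ∈ G)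
    (hgX : (g : A) * X ≠ X * g) :
    Module.finrank ℝ (unitSpan (centralizerIn G X)) < Module.finrank ℝ (unitSpan G) := by
  refine Submodule.finrank_lt_finrank_of_lt (lt_of_le_of_ne
    (Submodule.span_mono (Set.image_mono (centralizerIn_le G X))) fun h => hgX ?_)
  exact commute_of_mem_unitSpan_centralizerIn (h ▸ coe_mem_unitSpan hg)

variable [CompleteSpace A] {G : Subgroup Aˣ} {hcl : IsClosed (unitSet G)}

/-- In an elliptic group, every element of the Lie algebra is the sum of an element of the
centralizer of `X` and of a bracket with `X`. -/
theorem exists_eq_lie_add_of_mem_lieAlgebraOf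
    (hG : ∀ g ∈ G, ∃ R, ∀ m : ℕ, ‖((g ^ m : Aˣ) : A)‖ ≤ R) {X : A}
    (hX : X ∈ lieAlgebraOf G hcl) {V : A} (hV : V ∈ lieAlgebraOf G hcl) :
    ∃ Y ∈ lieAlgebraOf G hcl, ∃ Z ∈ lieAlgebraOf G hcl, X * Z = Z * X ∧ V = Y * X - X * Y + Z := by
  set 𝔤 := lieAlgebraOf G hcl
  let D : 𝔤 →ₗ[ℝ] 𝔤 := LinearMap.restrict (LinearMap.mulLeft ℝ X - LinearMap.mulRight ℝ X)
    (fun Y hY => lie_mem_lieAlgebraOf hX hY)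
  have hD : ∀ Y : 𝔤, (D Y : A) = X * Y - Y * X := fun Y => rfl
  have hdisj : Disjoint D.range D.ker := by
    rw [Submodule.disjoint_def]
    rintro _ ⟨Y, rfl⟩ h
    rw [LinearMap.mem_ker, ← Subtype.coe_inj, hD, hD, ZeroMemClass.coe_zero, sub_eq_zero] at h
    obtain ⟨R, hR⟩ := hG _ (expUnit_mem_of_mem_lieAlgebraOf hX)
    obtain ⟨R', hR'⟩ := hG _ (G.inv_mem (expUnit_mem_of_mem_lieAlgebraOf hX))
    exact Subtype.ext (lie_eq_zero_of_lie_lie_eq_zero hR hR' h)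
  have htop := Submodule.eq_top_of_disjoint D.range D.ker
    (LinearMap.finrank_range_add_finrank_ker D).ge hdisj
  obtain ⟨_, ⟨Y, rfl⟩, Z, hZ, hYZ⟩ := Submodule.mem_sup.1
    (htop ▸ Submodule.mem_top : (⟨V, hV⟩ : 𝔤) ∈ D.range ⊔ D.ker)
  rw [LinearMap.mem_ker, ← Subtype.coe_inj, hD, ZeroMemClass.coe_zero, sub_eq_zero] at hZ
  refine ⟨-Y, 𝔤.neg_mem Y.2, Z, Z.2, hZ, ?_⟩
  have hV' : V = ((D Y + Z : 𝔤) : A) := by rw [hYZ]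
  rw [hV', Submodule.coe_add, hD]
  noncomm_ring

/-- Elements of the Lie algebra close to `X` are conjugate, by an element close to `1`, to an
element commuting with `X`. -/
theorem eventually_exists_conj
    (hG : ∀ g ∈ G, ∃ R, ∀ m : ℕ, ‖((g ^ m : Aˣ) : A)‖ ≤ R) {X : A}
    (hX : X ∈ lieAlgebraOf G hcl) {P : A → Prop} (hP : ∀ᶠ Y in 𝓝 0, P Y) :
    ∀ᶠ V in 𝓝 X, V ∈ lieAlgebraOf G hcl → ∃ Y ∈ lieAlgebraOf G hcl, ∃ U : A,
      P Y ∧ X * U = U * X ∧ V = expUnit Y * U * expUnit (-Y) := by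
  obtain ⟨m, hm⟩ := (lieAlgebraOf G hcl).exists_isCompl
  set 𝔤 := lieAlgebraOf G hcl
  let 𝔥 : Submodule ℝ A := 𝔤 ⊓ (LinearMap.mulLeft ℝ X - LinearMap.mulRight ℝ X).ker
  have h𝔥 : ∀ Z, Z ∈ 𝔥 ↔ Z ∈ 𝔤 ∧ X * Z = Z * X := fun Z => by
    simp [𝔥, sub_eq_zero]
  let p₁ : 𝔤 × 𝔥 × m →L[ℝ] A := 𝔤.subtypeL.comp (ContinuousLinearMap.fst ℝ 𝔤 (𝔥 × m))
  let p₂ : 𝔤 × 𝔥 × m →L[ℝ] A := 𝔥.subtypeL.comp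
    ((ContinuousLinearMap.fst ℝ 𝔥 m).comp (ContinuousLinearMap.snd ℝ 𝔤 (𝔥 × m)))
  let p₃ : 𝔤 × 𝔥 × m →L[ℝ] A := m.subtypeL.comp
    ((ContinuousLinearMap.snd ℝ 𝔥 m).comp (ContinuousLinearMap.snd ℝ 𝔤 (𝔥 × m)))
  have e0 : ∀ q : 𝔤 × 𝔥 × m →L[ℝ] A, HasStrictFDerivAt (fun p => (expUnit (q p) : A)) q 0 := by
    intro q
    have := HasStrictFDerivAt.comp (0 : 𝔤 × 𝔥 × m) (g := fun X : A => (expUnit X : A))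
        (by simpa using hasStrictFDerivAt_expUnit_coe_zero) q.hasStrictFDerivAt
    exact this
  have hF := (((e0 p₁).mul' ((p₂.hasStrictFDerivAt (x := 0)).const_add X)).mul' (e0 (-p₁))).add
    (p₃.hasStrictFDerivAt (x := 0))
  have hsurj : ∀ V : A, ∃ Y ∈ 𝔤, ∃ Z ∈ 𝔥, ∃ W ∈ m, V = Y * X - X * Y + Z + W := by
    intro V
    have : V ∈ 𝔤 ⊔ m := by rw [hm.sup_eq_top]; trivial
    obtain ⟨V, hV, W, hW, rfl⟩ := Submodule.mem_sup.1 this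
    obtain ⟨Y, hY, Z, hZ, hXZ, rfl⟩ := exists_eq_lie_add_of_mem_lieAlgebraOf hG hX hV
    exact ⟨Y, hY, Z, (h𝔥 Z).2 ⟨hZ, hXZ⟩, W, hW, rfl⟩
  have hmap := hF.map_nhds_eq_of_surj (by
    rw [eq_top_iff]
    intro V _
    obtain ⟨Y, hY, Z, hZ, W, hW, rfl⟩ := hsurj V
    refine ⟨(⟨Y, hY⟩, ⟨Z, hZ⟩, ⟨W, hW⟩), ?_⟩
    simp [p₁, p₂, p₃, expUnit_zero]
    abel)
  have hF0 : (expUnit (p₁ 0) : A) * (X + p₂ 0) * expUnit ((-p₁) 0) + p₃ 0 = X := by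
    simp [expUnit_zero]
  simp only [Pi.add_apply, Pi.mul_apply, hF0] at hmap
  rw [← hmap, eventually_map]
  have hp₁ : Tendsto p₁ (𝓝 0) (𝓝 0) := by simpa using p₁.continuous.tendsto 0
  filter_upwards [hp₁.eventually hP] with p hp hV
  have hU : X + p₂ p ∈ 𝔤 := 𝔤.add_mem hX ((h𝔥 _).1 p.2.1.2).1
  have hW : p₃ p ∈ 𝔤 := by
    have hconj := conj_mem_lieAlgebraOf hU (expUnit_mem_of_mem_lieAlgebraOf p.1.2 : _ ∈ G)
    rw [← expUnit_neg] at hconj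
    have := 𝔤.sub_mem hV hconj
    simpa [p₁] using! this
  have hW0 : p₃ p = 0 := Submodule.disjoint_def.1 hm.disjoint _ hW p.2.2.2
  refine ⟨p₁ p, p.1.2, X + p₂ p, hp, ?_, ?_⟩
  · have : X * p₂ p = p₂ p * X := ((h𝔥 _).1 p.2.1.2).2
    rw [mul_add, add_mul, this]
  · simp [hW0]

end Centralizer

namespace IsSemisimplification

variable {A B : Type*} [NormedRing A] [NormedAlgebra ℝ A] [NormedRing B] [NormedAlgebra ℝ B]
  [CompleteSpace A] [FiniteDimensional ℝ A] [FiniteDimensional ℝ B] [NormOneClass B]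
  {G : Subgroup Aˣ} {L : A →ₗ[ℝ] B} {C : ℝ} {hcl : IsClosed (unitSet G)}

/-- If the centralizer in `G` of an element of the Lie algebra is bounded, then so is `G`. -/
theorem exists_bound_of_centralizerIn (hL : IsSemisimplification G L C)
    (hG : ∀ g ∈ G, ∃ R, ∀ m : ℕ, ‖((g ^ m : Aˣ) : A)‖ ≤ R) {X : A}
    (hX : X ∈ lieAlgebraOf G hcl) {M : ℝ} (hM : ∀ g ∈ centralizerIn G X, ‖(g : A)‖ ≤ M) :
    ∃ M', ∀ g ∈ G, ‖(g : A)‖ ≤ M' := by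
  have hC := hL.one_le
  set 𝔤 := lieAlgebraOf G hcl
  obtain ⟨ε, hε, hεC⟩ : ∃ ε : ℝ, 0 < ε ∧ 8 * ε * (C + 1) ^ 3 ≤ 1 :=
    ⟨1 / (8 * (C + 1) ^ 3), by positivity, by field_simp; rfl⟩
  have hLc : Continuous L := L.continuous_of_finiteDimensional
  have hP : ∀ᶠ Y in 𝓝 (0 : A), ‖(expUnit Y : A)‖ < ‖(1 : A)‖ + 1 ∧
      ‖L (expUnit (-Y) : A) - 1‖ < ε / (2 * C) := by
    refine ((continuous_expUnit_coe.norm.tendsto (0 : A)).eventually_lt_const ?_).and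
      (((hLc.comp (continuous_expUnit_coe.comp continuous_neg)).sub
        continuous_const).norm.tendsto (0 : A) |>.eventually_lt_const ?_)
    · simp [expUnit_zero]
    · simp [expUnit_zero, hL.map_one]
      positivity
  obtain ⟨δ, hδ, hball⟩ := Metric.eventually_nhds_iff.1 (eventually_exists_conj hG hX hP)
  obtain ⟨K, hK, hKL⟩ := (L.comp 𝔤.subtype).exists_antilipschitzWith (by
    rw [LinearMap.ker_eq_bot']
    rintro ⟨Y, hY⟩ hLY
    exact Subtype.ext (hL.eq_zero_of_map_eq_zero hG hY hLY))
  obtain ⟨ε', hε', hεε', hεδ⟩ : ∃ ε' : ℝ, 0 < ε' ∧ ε' ≤ ε / 2 ∧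
      K * (2 * ε' * ‖L X‖ * C) < δ := by
    have : ∀ᶠ e : ℝ in 𝓝[>] 0, e ≤ ε / 2 ∧ K * (2 * e * ‖L X‖ * C) < δ := by
      refine nhdsWithin_le_nhds ((eventually_le_nhds (by positivity)).and ?_)
      have hc : Continuous fun e : ℝ => (K : ℝ) * (2 * e * ‖L X‖ * C) := by fun_prop
      exact (hc.tendsto 0).eventually_lt_const (by simpa using hδ)
    obtain ⟨e, ⟨h1, h2⟩, h3⟩ := (this.and self_mem_nhdsWithin).exists
    exact ⟨e, h3, h1, h2⟩
  refine hL.exists_bound_of_near hε' (M := (‖(1 : A)‖ + 1) * M) fun g hg hgε => ?_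
  have hXs := mem_unitSpan_of_mem_lieAlgebraOf hX
  have hconj := conj_mem_lieAlgebraOf hX hg
  have hnear : ‖(g : A) * X * (g⁻¹ : Aˣ) - X‖ < δ := by
    have h1 := hKL.le_mul_dist (⟨_, hconj⟩ : 𝔤) ⟨X, hX⟩
    rw [Subtype.dist_eq, dist_eq_norm, dist_eq_norm] at h1
    refine (h1.trans ?_).trans_lt hεδ
    gcongr
    have e : L ((g : A) * X * (g⁻¹ : Aˣ)) - L X =
        ((L g - 1) * L X - L X * (L g - 1)) * L (g⁻¹ : Aˣ) := by
      rw [hL.map_mul (mul_mem_unitSpan (coe_mem_unitSpan hg) hXs)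
        (coe_mem_unitSpan (G.inv_mem hg)), hL.map_mul (coe_mem_unitSpan hg) hXs]
      have : ((L g - 1) * L X - L X * (L g - 1)) * L (g⁻¹ : Aˣ)
          = L g * L X * L (g⁻¹ : Aˣ) - L X * (L g * L (g⁻¹ : Aˣ)) := by noncomm_ring
      rw [this, hL.map_mul_map_inv hg, mul_one]
    change ‖L ((g : A) * X * (g⁻¹ : Aˣ)) - L X‖ ≤ _
    rw [e]
    calc _ ≤ ‖(L g - 1) * L X - L X * (L g - 1)‖ * ‖L (g⁻¹ : Aˣ)‖ := norm_mul_le _ _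
      _ ≤ (ε' * ‖L X‖ + ‖L X‖ * ε') * C := by
        gcongr
        · refine (norm_sub_le _ _).trans (add_le_add ?_ ?_)
          · exact (norm_mul_le _ _).trans (by gcongr)
          · exact (norm_mul_le _ _).trans (by gcongr)
        · exact hL.bound _ (G.inv_mem hg)
      _ = _ := by ring
  obtain ⟨Y, hY, U, ⟨hY1, hY2⟩, hU, hgU⟩ := hball (by rwa [dist_eq_norm]) hconj
  have hYG : expUnit (-Y) ∈ G := expUnit_mem_of_mem_lieAlgebraOf (𝔤.neg_mem hY)
  set k : Aˣ := expUnit (-Y) * g with hk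
  have hkG : k ∈ G := G.mul_mem hYG hg
  have hkε : ‖L k - 1‖ ≤ ε := by
    rw [hk, Units.val_mul, hL.map_mul (coe_mem_unitSpan hYG) (coe_mem_unitSpan hg)]
    have e : L (expUnit (-Y) : A) * L g - 1 = (L (expUnit (-Y) : A) - 1) * L g + (L g - 1) := by
      noncomm_ring
    rw [e]
    calc _ ≤ ‖(L (expUnit (-Y) : A) - 1) * L g‖ + ‖L g - 1‖ := norm_add_le _ _
      _ ≤ ε / (2 * C) * C + ε / 2 := by
        gcongr
        · exact (norm_mul_le _ _).trans (by gcongr; exact hL.bound _ hg)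
        · exact hgε.trans hεε'
      _ = ε := by field_simp; norm_num
  have hkU : (k : A) * X * (k⁻¹ : Aˣ) = U := by
    have : (k : A) * X * (k⁻¹ : Aˣ)
        = expUnit (-Y) * ((g : A) * X * (g⁻¹ : Aˣ)) * expUnit Y := by
      rw [hk, mul_inv_rev, ← expUnit_neg, neg_neg]
      simp only [Units.val_mul, mul_assoc]
    rw [this, hgU, expUnit_neg]
    simp [mul_assoc]
  have hkX : (k : A) * X = X * k := by
    refine commute_of_forall_commute_expUnit fun t => ?_
    refine hL.commute_of_commute_conj hG hε hεC hkG (hX t) hkε ?_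
    rw [← expUnit_conj, mul_smul_comm, smul_mul_assoc, hkU]
    refine commute_expUnit_of_commute ?_
    exact ((Commute.smul_left (Commute.smul_right hU t) t).exp_left :)
  have hkM := hM k ⟨hkG, hkX⟩
  calc ‖(g : A)‖ = ‖(expUnit Y : A) * k‖ := by
        rw [hk, expUnit_neg, ← Units.val_mul, mul_inv_cancel_left]
    _ ≤ ‖(expUnit Y : A)‖ * ‖(k : A)‖ := norm_mul_le _ _
    _ ≤ _ := by gcongr

/-- A closed group of power-bounded units admitting a semisimplification is bounded, provided
that this holds for commuting families. -/
theorem exists_bound (hab : ∀ W : Set Aˣ, (∀ g ∈ W, ∀ h ∈ W, Commute g h) →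
      (∀ g ∈ W, (∃ R, ∀ m : ℕ, ‖((g ^ m : Aˣ) : A)‖ ≤ R) ∧
        ∃ R, ∀ m : ℕ, ‖((g⁻¹ ^ m : Aˣ) : A)‖ ≤ R) → ∃ M, ∀ g ∈ W, ‖(g : A)‖ ≤ M)
    (hL : IsSemisimplification G L C) (hcl : IsClosed (unitSet G))
    (hG : ∀ g ∈ G, ∃ R, ∀ m : ℕ, ‖((g ^ m : Aˣ) : A)‖ ≤ R) :
    ∃ M, ∀ g ∈ G, ‖(g : A)‖ ≤ M := by
  induction hd : Module.finrank ℝ (unitSpan G) using Nat.strong_induction_on generalizing G with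
  | h d ih =>
    have hC := hL.one_le
    by_cases hcomm : ∀ X ∈ lieAlgebraOf G hcl, ∀ g ∈ G, (g : A) * X = X * g
    · obtain ⟨r, hr, hcen⟩ := exists_commute_of_near_one hcomm
      obtain ⟨ε, hε, hεC⟩ : ∃ ε : ℝ, 0 < ε ∧ 8 * ε * (C + 1) ^ 3 ≤ 1 :=
        ⟨1 / (8 * (C + 1) ^ 3), by positivity, by field_simp; rfl⟩
      obtain ⟨M, hM⟩ := hab {g | g ∈ G ∧ ‖L g - 1‖ ≤ ε}
        (fun g hg h hh => hL.commute_of_near hG hε hεC hr hcen hg.1 hh.1 hg.2 hh.2)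
        (fun g hg => ⟨hG g hg.1, hG _ (G.inv_mem hg.1)⟩)
      exact hL.exists_bound_of_near hε fun g hg hgε => hM g ⟨hg, hgε⟩
    · push Not at hcomm
      obtain ⟨X, hX, g, hg, hgX⟩ := hcomm
      obtain ⟨M, hM⟩ := ih _ (hd ▸ finrank_unitSpan_centralizerIn_lt hg hgX)
        (hL.mono (centralizerIn_le G X)) (isClosed_unitSet_centralizerIn hcl X)
        (fun g hg => hG g hg.1) rfl
      exact hL.exists_bound_of_centralizerIn hG hX hM

end IsSemisimplification

section PowerBounded

open Module.End

variable {V : Type*} [NormedAddCommGroup V] [NormedSpace ℂ V]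

theorem norm_le_one_of_bounded_pow {f : Module.End ℂ V} {μ : ℂ} {v : V} (hv : v ≠ 0)
    (hμ : f v = μ • v) {R : ℝ} (hR : ∀ m : ℕ, ‖(f ^ m) v‖ ≤ R) : ‖μ‖ ≤ 1 := by
  by_contra! h
  have hpow : ∀ m : ℕ, (f ^ m) v = μ ^ m • v := by
    intro m
    induction m with
    | zero => simp
    | succ m ih => rw [pow_succ', Module.End.mul_apply, ih, map_smul, hμ, smul_smul, pow_succ]
  have hpos : 0 < ‖v‖ := norm_pos_iff.2 hv
  obtain ⟨m, hm⟩ := pow_unbounded_of_one_lt (R / ‖v‖) h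
  rw [div_lt_iff₀ hpos] at hm
  have := hR m
  rw [hpow, norm_smul, norm_pow] at this
  linarith

theorem one_le_norm_of_bounded_inv_pow {f g : Module.End ℂ V} (hgf : g * f = 1) {μ : ℂ} {v : V}
    (hv : v ≠ 0) (hμ : f v = μ • v) {R : ℝ} (hR : ∀ m : ℕ, ‖(g ^ m) v‖ ≤ R) : 1 ≤ ‖μ‖ := by
  have h1 : μ • g v = v := by
    rw [← map_smul, ← hμ, ← Module.End.mul_apply, hgf, Module.End.one_apply]
  have hμ0 : μ ≠ 0 := by
    rintro rfl
    exact hv (by rw [← h1, zero_smul])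
  have h2 : g v = μ⁻¹ • v := by rw [← h1, smul_smul, inv_mul_cancel₀ hμ0, one_smul, h1]
  have := norm_le_one_of_bounded_pow hv h2 hR
  rwa [norm_inv, inv_le_one₀ (by positivity)] at this

/-- A vector in the kernel of `(f - μ)²` with bounded orbit is an eigenvector. -/
theorem sub_apply_eq_zero_of_bounded_pow {f g : Module.End ℂ V} (hgf : g * f = 1) {μ : ℂ}
    (hf : ∀ v, ∃ R, ∀ m : ℕ, ‖(f ^ m) v‖ ≤ R) (hg : ∀ v, ∃ R, ∀ m : ℕ, ‖(g ^ m) v‖ ≤ R)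
    {v : V} (hv : (f - μ • (1 : Module.End ℂ V)) ((f - μ • (1 : Module.End ℂ V)) v) = 0) :
    (f - μ • (1 : Module.End ℂ V)) v = 0 := by
  set w := (f - μ • (1 : Module.End ℂ V)) v with hw
  have hfv : f v = μ • v + w := by simp [hw]
  have hfw : f w = μ • w := by simpa [sub_eq_zero] using hv
  by_contra hne
  obtain ⟨Rw, hRw⟩ := hf w
  obtain ⟨Rg, hRg⟩ := hg w
  have hμ : ‖μ‖ = 1 := le_antisymm (norm_le_one_of_bounded_pow hne hfw hRw)
    (one_le_norm_of_bounded_inv_pow hgf hne hfw hRg)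
  have hpow : ∀ m : ℕ, (f ^ (m + 1)) v = μ ^ (m + 1) • v + ((m + 1 : ℕ) * μ ^ m) • w := by
    intro m
    induction m with
    | zero => simp [hfv]
    | succ m ih =>
      rw [pow_succ', Module.End.mul_apply, ih, map_add, map_smul, map_smul, hfv, hfw]
      push_cast
      module
  obtain ⟨R, hR⟩ := hf v
  have hpos : 0 < ‖w‖ := norm_pos_iff.2 hne
  obtain ⟨m, hm⟩ := exists_nat_gt ((R + ‖v‖) / ‖w‖)
  rw [div_lt_iff₀ hpos] at hm
  have h1 : ((m + 1 : ℕ) * μ ^ m) • w = (f ^ (m + 1)) v - μ ^ (m + 1) • v := by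
    rw [hpow]; abel
  have h2 : ‖((m + 1 : ℕ) * μ ^ m) • w‖ ≤ R + ‖v‖ := by
    rw [h1]
    refine (norm_sub_le _ _).trans (add_le_add (hR _) ?_)
    rw [norm_smul, norm_pow, hμ, one_pow, one_mul]
  rw [norm_smul, norm_mul, norm_pow, hμ, one_pow, mul_one, Complex.norm_natCast] at h2
  push_cast at h2
  nlinarith

/-- A commuting family of invertible operators with bounded powers is bounded. -/
theorem exists_bound_of_commute [FiniteDimensional ℂ V] {ι : Type*} {f g : ι → Module.End ℂ V}
    (hgf : ∀ i, g i * f i = 1) (hcomm : ∀ i j, Commute (f i) (f j))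
    (hf : ∀ i v, ∃ R, ∀ m : ℕ, ‖(f i ^ m) v‖ ≤ R) (hg : ∀ i v, ∃ R, ∀ m : ℕ, ‖(g i ^ m) v‖ ≤ R)
    (v : V) : ∃ R, ∀ i, ‖f i v‖ ≤ R := by
  have hgen : ∀ i μ v, v ∈ (f i).maxGenEigenspace μ → ‖f i v‖ ≤ ‖v‖ := by
    intro i μ v hv
    have heig : (f i - μ • (1 : Module.End ℂ V)) v = 0 := by
      obtain ⟨k, hk⟩ := (mem_maxGenEigenspace _ _ _).1 hv
      induction k with
      | zero => simp_all
      | succ k ih =>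
        rcases k with _ | k
        · simpa using hk
        · refine ih ?_
          rw [pow_succ', Module.End.mul_apply]
          refine sub_apply_eq_zero_of_bounded_pow (hgf i) (hf i) (hg i) ?_
          rwa [pow_succ', pow_succ', Module.End.mul_apply, Module.End.mul_apply] at hk
    rcases eq_or_ne v 0 with rfl | hne
    · simp
    have hfv : f i v = μ • v := by simpa [sub_eq_zero] using heig
    obtain ⟨R, hR⟩ := hf i v
    rw [hfv, norm_smul]
    exact mul_le_of_le_one_left (norm_nonneg _) (norm_le_one_of_bounded_pow hne hfv hR)
  have htop := iSup_iInf_maxGenEigenspace_eq_top_of_iSup_maxGenEigenspace_eq_top_of_commute f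
    (fun i j _ => hcomm i j) (fun i => iSup_maxGenEigenspace_eq_top (f i))
  have hv : v ∈ ⨆ χ : ι → ℂ, ⨅ i, (f i).maxGenEigenspace (χ i) := htop ▸ Submodule.mem_top
  induction hv using Submodule.iSup_induction' with
  | mem χ x hx => exact ⟨‖x‖, fun i => hgen i (χ i) x ((Submodule.mem_iInf _).1 hx i)⟩
  | zero => exact ⟨0, by simp⟩
  | add x y _ _ hx hy =>
    obtain ⟨R, hR⟩ := hx
    obtain ⟨R', hR'⟩ := hy
    exact ⟨R + R', fun i => by
      rw [map_add]; exact (norm_add_le _ _).trans (add_le_add (hR i) (hR' i))⟩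

end PowerBounded

section MatrixBounds

open scoped Matrix.Norms.Operator

variable {ι : Type*} [Fintype ι] [DecidableEq ι]

theorem norm_map_ofReal_mulVec_le (g : Matrix ι ι ℝ) (v : ι → ℂ) :
    ‖(g.map Complex.ofReal).mulVec v‖ ≤ ‖g‖ * ‖v‖ := by
  have h : ‖g.map Complex.ofReal‖ = ‖g‖ := by simp [Matrix.linfty_opNorm_def]
  rw [← h]
  exact Matrix.linfty_opNorm_mulVec _ _

/-- A complexified real matrix as an endomorphism. -/
noncomputable def complexify (ι : Type*) [Fintype ι] [DecidableEq ι] :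
    Matrix ι ι ℝ →+* Module.End ℂ (ι → ℂ) :=
  (Matrix.toLinAlgEquiv' (R := ℂ) (n := ι) : Matrix ι ι ℂ →+* Module.End ℂ (ι → ℂ)).comp
    (Complex.ofRealHom.mapMatrix)

theorem complexify_apply (g : Matrix ι ι ℝ) (v : ι → ℂ) :
    complexify ι g v = (g.map Complex.ofReal).mulVec v := rfl

/-- Commuting families of matrices with bounded powers are bounded. -/
theorem exists_bound_of_commute_matrix (W : Set (Matrix ι ι ℝ)ˣ)
    (hcomm : ∀ g ∈ W, ∀ h ∈ W, Commute g h)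
    (hW : ∀ g ∈ W, (∃ R, ∀ m : ℕ, ‖((g ^ m : (Matrix ι ι ℝ)ˣ) : Matrix ι ι ℝ)‖ ≤ R) ∧
      ∃ R, ∀ m : ℕ, ‖((g⁻¹ ^ m : (Matrix ι ι ℝ)ˣ) : Matrix ι ι ℝ)‖ ≤ R) :
    ∃ M, ∀ g ∈ W, ‖(g : Matrix ι ι ℝ)‖ ≤ M := by
  have hbd : ∀ g : (Matrix ι ι ℝ)ˣ,
      (∃ R, ∀ m : ℕ, ‖((g ^ m : (Matrix ι ι ℝ)ˣ) : Matrix ι ι ℝ)‖ ≤ R) →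
      ∀ v, ∃ R, ∀ m : ℕ, ‖(complexify ι g ^ m) v‖ ≤ R := by
    rintro g ⟨R, hR⟩ v
    refine ⟨R * ‖v‖, fun m => ?_⟩
    rw [← map_pow, ← Units.val_pow_eq_pow_val, complexify_apply]
    exact (norm_map_ofReal_mulVec_le _ _).trans (by gcongr; exact hR m)
  have key := exists_bound_of_commute (ι := W) (f := fun g => complexify ι (g : (Matrix ι ι ℝ)ˣ))
    (g := fun g => complexify ι ((g : (Matrix ι ι ℝ)ˣ)⁻¹ : (Matrix ι ι ℝ)ˣ))
    (fun g => by rw [← map_mul, Units.inv_mul, map_one])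
    (fun g h => by
      have := congrArg Units.val (hcomm g g.2 h h.2).eq
      simp only [Units.val_mul] at this
      rw [Commute, SemiconjBy, ← map_mul, ← map_mul, this])
    (fun g => hbd _ (hW g g.2).1) (fun g => hbd _ (hW g g.2).2)
  choose R hR using fun j => key (Pi.single j 1)
  refine ⟨∑ j, R j, fun g hg => ?_⟩
  rw [Matrix.linfty_opNorm_eq_opNorm]
  refine ContinuousLinearMap.opNorm_le_bound _ ?_ ?_
  · exact Finset.sum_nonneg fun j _ => (norm_nonneg _).trans (hR j ⟨g, hg⟩)
  · intro v
    rw [pi_norm_le_iff_of_nonneg (mul_nonneg (Finset.sum_nonneg fun j _ =>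
      (norm_nonneg _).trans (hR j ⟨g, hg⟩)) (norm_nonneg _))]
    intro i
    change ‖∑ j, (g : Matrix ι ι ℝ) i j * v j‖ ≤ _
    rw [Finset.sum_mul]
    refine (norm_sum_le _ _).trans (Finset.sum_le_sum fun j _ => ?_)
    rw [norm_mul]
    gcongr
    · exact (norm_nonneg _).trans (hR j ⟨g, hg⟩)
    · have h1 := (norm_le_pi_norm _ i).trans (hR j ⟨g, hg⟩)
      rw [complexify_apply] at h1
      simpa using h1
    · exact norm_le_pi_norm v j

end MatrixBounds

section Traces

open scoped Matrix.Norms.Operator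

theorem linfty_opNorm_le_of_forall_le {ι : Type*} [Fintype ι] {M : Matrix ι ι ℝ} {K : ℝ}
    (hK : 0 ≤ K) (h : ∀ i j, |M i j| ≤ K) : ‖M‖ ≤ Fintype.card ι * K := by
  rw [Matrix.linfty_opNorm_eq_opNorm]
  refine ContinuousLinearMap.opNorm_le_bound _ (by positivity) fun v => ?_
  rw [pi_norm_le_iff_of_nonneg (by positivity)]
  intro i
  change ‖∑ j, M i j * v j‖ ≤ _
  calc ‖∑ j, M i j * v j‖ ≤ ∑ j : ι, K * ‖v‖ := by
        refine (norm_sum_le _ _).trans (Finset.sum_le_sum fun j _ => ?_)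
        rw [norm_mul]
        gcongr
        · exact h i j
        · exact norm_le_pi_norm v j
    _ = _ := by simp [mul_assoc]

theorem abs_apply_le_linfty_opNorm {ι : Type*} [Fintype ι] (M : Matrix ι ι ℝ) (i j : ι) :
    |M i j| ≤ ‖M‖ := by
  classical
  have h1 := (norm_le_pi_norm _ i).trans (Matrix.linfty_opNorm_mulVec M (Pi.single j 1))
  simpa [Pi.norm_single] using h1

/-- The trace of a power-bounded matrix is bounded by its size. -/
theorem abs_trace_le_of_bounded_pow_matrix {ι : Type*} [Fintype ι] [DecidableEq ι]
    {M : Matrix ι ι ℝ} {R : ℝ} (hR : ∀ m : ℕ, ‖M ^ m‖ ≤ R) : |M.trace| ≤ Fintype.card ι := by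
  have htr : ((M.trace : ℝ) : ℂ) = (M.map Complex.ofReal).charpoly.roots.sum := by
    rw [← Matrix.trace_eq_sum_roots_charpoly]
    simp [Matrix.trace]
  have hroot : ∀ μ ∈ (M.map Complex.ofReal).charpoly.roots, ‖μ‖ ≤ 1 := by
    intro μ hμ
    have hμ' : Module.End.HasEigenvalue (complexify ι M) μ := by
      rw [Module.End.hasEigenvalue_iff_isRoot_charpoly]
      have : (complexify ι M).charpoly = (M.map Complex.ofReal).charpoly :=
        Matrix.charpoly_toLin' (M.map Complex.ofReal)
      rw [this]
      exact (Polynomial.mem_roots'.1 hμ).2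
    obtain ⟨v, hv⟩ := hμ'.exists_hasEigenvector
    refine norm_le_one_of_bounded_pow hv.2 hv.apply_eq_smul (R := R * ‖v‖) fun m => ?_
    rw [← map_pow, complexify_apply]
    exact (norm_map_ofReal_mulVec_le _ _).trans (by gcongr; exact hR m)
  rw [← Real.norm_eq_abs, ← Complex.norm_real, htr]
  refine (norm_multiset_sum_le _).trans ?_
  have hcard : Multiset.card (M.map Complex.ofReal).charpoly.roots ≤ Fintype.card ι := by
    refine (Polynomial.card_roots' _).trans ?_
    rw [Matrix.charpoly_natDegree_eq_dim]
  calc _ ≤ Multiset.card ((M.map Complex.ofReal).charpoly.roots.map fun μ => ‖μ‖) • (1 : ℝ) :=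
        Multiset.sum_le_card_nsmul _ _ fun x hx => by
          obtain ⟨μ, hμ, rfl⟩ := Multiset.mem_map.1 hx
          exact hroot μ hμ
    _ ≤ _ := by simpa using hcard

variable {V : Type*} [AddCommGroup V] [Module ℝ V] [FiniteDimensional ℝ V]

/-- The trace of an endomorphism with bounded powers is bounded by the dimension. -/
theorem abs_trace_le_finrank {f : Module.End ℝ V}
    (hf : ∀ (v : V) (φ : V →ₗ[ℝ] ℝ), ∃ R, ∀ m : ℕ, |φ ((f ^ m) v)| ≤ R) :
    |LinearMap.trace ℝ V f| ≤ Module.finrank ℝ V := by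
  let b := Module.finBasis ℝ V
  choose R hR using fun i j => hf (b j) (b.coord i)
  have hR0 : ∀ i j, 0 ≤ R i j := fun i j => (abs_nonneg _).trans (hR i j 0)
  rw [LinearMap.trace_eq_matrix_trace ℝ b]
  have := abs_trace_le_of_bounded_pow_matrix (M := LinearMap.toMatrix b b f)
    (R := Fintype.card (Fin (Module.finrank ℝ V)) * ∑ i, ∑ j, R i j) (fun m => by
      refine linfty_opNorm_le_of_forall_le
        (Finset.sum_nonneg fun i _ => Finset.sum_nonneg fun j _ => hR0 i j) fun i j => ?_
      rw [LinearMap.toMatrix_pow, LinearMap.toMatrix_apply]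
      refine (hR i j m).trans ?_
      refine le_trans ?_ (Finset.single_le_sum (f := fun i => ∑ j, R i j)
        (fun i _ => Finset.sum_nonneg fun j _ => hR0 i j) (Finset.mem_univ i))
      exact Finset.single_le_sum (f := fun j => R i j) (fun j _ => hR0 i j) (Finset.mem_univ j))
  simpa using this

open Polynomial in
/-- An endomorphism with a nonzero fixed vector has a power of nonzero trace. -/
theorem eq_zero_of_forall_trace_pow_eq_zero {f : Module.End ℝ V}
    (htr : ∀ j : ℕ, LinearMap.trace ℝ V (f ^ (j + 1)) = 0) {v : V} (hv : f v = v) : v = 0 := by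
  by_contra hne
  have heval : ∀ q : ℝ[X], aeval f q v = q.eval 1 • v := fun q =>
    Module.End.aeval_apply_of_hasEigenvector (f := f) (μ := 1)
      ⟨Module.End.mem_eigenspace_iff.2 (by simpa using hv), hne⟩
  have htrq : ∀ q : ℝ[X], LinearMap.trace ℝ V (aeval f (q * X)) = 0 := by
    intro q
    induction q using Polynomial.induction_on' with
    | add p q hp hq => rw [add_mul, map_add, map_add, hp, hq, add_zero]
    | monomial n a =>
      rw [← C_mul_X_pow_eq_monomial, mul_assoc, ← pow_succ]
      simp [aeval_C, ← Algebra.smul_def, htr]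
  have hp : f.charpoly ≠ 0 := (LinearMap.charpoly_monic f).ne_zero
  obtain ⟨s, hs, hsX⟩ := exists_eq_pow_rootMultiplicity_mul_and_not_dvd f.charpoly hp 0
  rw [C_0, sub_zero] at hs hsX
  set r := rootMultiplicity 0 f.charpoly
  have hcop : IsCoprime (X ^ (r + 1)) s :=
    (irreducible_X.coprime_iff_not_dvd.2 hsX).pow_left
  obtain ⟨α, β, hαβ⟩ := hcop
  have hCH : aeval f (X ^ r * s) = 0 := by rw [← hs]; exact LinearMap.aeval_self_charpoly f
  have hidem : IsIdempotentElem (aeval f (α * X ^ (r + 1))) := by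
    have h1 : α * X ^ (r + 1) * (α * X ^ (r + 1))
        = α * X ^ (r + 1) - α * X * β * (X ^ r * s) := by
      have : α * X ^ (r + 1) * (α * X ^ (r + 1)) = α * X ^ (r + 1) * (1 - β * s) := by
        rw [← hαβ]; ring
      rw [this]; ring
    rw [IsIdempotentElem, ← map_mul, h1, map_sub, map_mul (aeval f) _ (X ^ r * s), hCH, mul_zero,
      sub_zero]
  have hzero := LinearMap.IsIdempotentElem.eq_zero_of_trace_eq_zero hidem (by
    rw [pow_succ, ← mul_assoc]; exact htrq _)
  have e1 : (α * X ^ (r + 1)).eval 1 = 0 := by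
    have := heval (α * X ^ (r + 1))
    rw [hzero, LinearMap.zero_apply] at this
    exact (smul_eq_zero.1 this.symm).resolve_right hne
  have e2 : (X ^ r * s).eval 1 = 0 := by
    have := heval (X ^ r * s)
    rw [hCH, LinearMap.zero_apply] at this
    exact (smul_eq_zero.1 this.symm).resolve_right hne
  have e3 := congrArg (eval 1) hαβ
  simp only [eval_add, eval_mul, eval_pow, eval_X, one_pow, mul_one, one_mul, eval_one] at e1 e2 e3
  simp [e1, e2] at e3

end Traces

section Semisimplification

open scoped Matrix.Norms.Operator

variable {𝒜 V : Type*} [Ring 𝒜] [Algebra ℝ 𝒜] [AddCommGroup V] [Module ℝ V]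

/-- Every element of `G` acts on `V` with (weakly) bounded powers. -/
def IsElliptic (G : Set 𝒜) (ρ : 𝒜 →ₐ[ℝ] Module.End ℝ V) : Prop :=
  ∀ g ∈ G, ∀ (v : V) (φ : V →ₗ[ℝ] ℝ), ∃ R, ∀ m : ℕ, |φ ((ρ g ^ m) v)| ≤ R

/-- The matrices of `ρ` can be brought, by a change of basis, arbitrarily close to those of a
linear map which is bounded on `G`. -/
def HasBoundedDegeneration (G : Set 𝒜) (ρ : 𝒜 →ₐ[ℝ] Module.End ℝ V) : Prop :=
  ∃ (ι : Type) (_ : Fintype ι) (_ : DecidableEq ι) (L : 𝒜 →ₗ[ℝ] Matrix ι ι ℝ) (C : ℝ),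
    (∀ g ∈ G, ∀ i j, |L g i j| ≤ C) ∧
    ∀ (F : Finset 𝒜) (ε : ℝ), 0 < ε → ∃ b : Module.Basis ι ℝ V,
      ∀ a ∈ F, ∀ i j, |LinearMap.toMatrix b b (ρ a) i j - L a i j| ≤ ε

theorem eq_zero_of_trace_mul_eq_zero [FiniteDimensional ℝ V] {ρ : 𝒜 →ₐ[ℝ] Module.End ℝ V}
    (hirr : ∀ W : Submodule ℝ V, (∀ a, ∀ w ∈ W, ρ a w ∈ W) → W = ⊥ ∨ W = ⊤)
    {x : 𝒜} (hx : ∀ y, LinearMap.trace ℝ V (ρ (x * y)) = 0) : ρ x = 0 := by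
  by_contra hne
  obtain ⟨v, hv⟩ : ∃ v, ρ x v ≠ 0 := by
    by_contra! h
    exact hne (LinearMap.ext h)
  have htop := (hirr (LinearMap.range ((LinearMap.applyₗ (ρ x v)).comp ρ.toLinearMap)) (by
    rintro a _ ⟨y, rfl⟩
    exact ⟨a * y, by simp⟩)).resolve_left (by
      intro hbot
      apply hv
      rw [← Submodule.mem_bot ℝ, ← hbot]
      exact ⟨1, by simp⟩)
  obtain ⟨y, hy⟩ : v ∈ LinearMap.range ((LinearMap.applyₗ (ρ x v)).comp ρ.toLinearMap) :=
    htop ▸ Submodule.mem_top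
  have hfix : ρ (y * x) v = v := by simpa using hy
  have hv0 : v = 0 := by
    refine eq_zero_of_forall_trace_pow_eq_zero (f := ρ (y * x)) (fun j => ?_) hfix
    rw [← map_pow, pow_succ', mul_assoc, map_mul, LinearMap.trace_mul_comm, ← map_mul, mul_assoc]
    exact hx _
  exact hv (by simp [hv0])

theorem exists_bound_of_irreducible [FiniteDimensional ℝ V] {G : Set 𝒜}
    {ρ : 𝒜 →ₐ[ℝ] Module.End ℝ V}
    (hspan : Submodule.span ℝ G = ⊤) (hmul : ∀ g ∈ G, ∀ h ∈ G, g * h ∈ G) (hell : IsElliptic G ρ)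
    (hirr : ∀ W : Submodule ℝ V, (∀ a, ∀ w ∈ W, ρ a w ∈ W) → W = ⊥ ∨ W = ⊤)
    {ι : Type*} [Fintype ι] [DecidableEq ι] (b : Module.Basis ι ℝ V) :
    ∃ C, ∀ g ∈ G, ∀ i j, |LinearMap.toMatrix b b (ρ g) i j| ≤ C := by
  let M : 𝒜 →ₗ[ℝ] Matrix ι ι ℝ := (LinearMap.toMatrix b b).toLinearMap.comp ρ.toLinearMap
  have hMmul : ∀ x y, M (x * y) = M x * M y := fun x y => by
    change LinearMap.toMatrix b b (ρ (x * y)) = _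
    rw [map_mul, LinearMap.toMatrix_mul]
    rfl
  have hMtr : ∀ x, (M x).trace = LinearMap.trace ℝ V (ρ x) := fun x =>
    (LinearMap.trace_eq_matrix_trace ℝ b (ρ x)).symm
  by_contra! hunb
  have hbig : ∀ k : ℕ, ∃ g ∈ G, (k : ℝ) < ‖M g‖ := fun k => by
    obtain ⟨g, hg, i, j, hij⟩ := hunb k
    exact ⟨g, hg, hij.trans_le (abs_apply_le_linfty_opNorm (M g) i j)⟩
  choose g hgG hgk using hbig
  have hpos : ∀ k, 0 < ‖M (g k)‖ := fun k => (Nat.cast_nonneg k).trans_lt (hgk k)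
  let u : ℕ → Matrix ι ι ℝ := fun k => ‖M (g k)‖⁻¹ • M (g k)
  have hu : ∀ k, u k ∈ Metric.sphere (0 : Matrix ι ι ℝ) 1 := fun k => by
    rw [mem_sphere_zero_iff_norm, norm_smul, norm_inv, norm_norm, inv_mul_cancel₀ (hpos k).ne']
  obtain ⟨N, hN, ψ, hψ, hlim⟩ := (isCompact_sphere (0 : Matrix ι ι ℝ) 1).tendsto_subseq hu
  obtain ⟨x, hx⟩ : N ∈ LinearMap.range M :=
    (Submodule.closed_of_finiteDimensional (LinearMap.range M)).mem_of_tendsto hlim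
      (Eventually.of_forall fun k => ⟨‖M (g (ψ k))‖⁻¹ • g (ψ k), by simp [u]⟩)
  have hinv : Tendsto (fun k => ‖M (g (ψ k))‖⁻¹) atTop (𝓝 0) :=
    (tendsto_inv_atTop_zero.comp (tendsto_atTop_mono (fun k => (hgk k).le)
      tendsto_natCast_atTop_atTop)).comp hψ.tendsto_atTop
  have htrG : ∀ h ∈ G, LinearMap.trace ℝ V (ρ (x * h)) = 0 := by
    intro h hh
    have h1 : Tendsto (fun k => (u (ψ k) * M h).trace) atTop (𝓝 (N * M h).trace) := by
      have hc : Continuous fun X : Matrix ι ι ℝ => (X * M h).trace := by fun_prop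
      exact (hc.tendsto N).comp hlim
    have h2 : Tendsto (fun k => (u (ψ k) * M h).trace) atTop (𝓝 0) := by
      refine squeeze_zero_norm (fun k => ?_)
        (by simpa using hinv.mul_const (Module.finrank ℝ V : ℝ))
      simp only [u]
      rw [smul_mul_assoc, Matrix.trace_smul, ← hMmul, hMtr, norm_smul, norm_inv, norm_norm]
      gcongr
      exact abs_trace_le_finrank (hell _ (hmul _ (hgG _) _ hh))
    rw [← hMtr, hMmul, hx]
    exact tendsto_nhds_unique h1 h2
  have htr : ∀ y, LinearMap.trace ℝ V (ρ (x * y)) = 0 := by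
    intro y
    have hy : y ∈ Submodule.span ℝ G := hspan ▸ Submodule.mem_top
    have hle : Submodule.span ℝ G ≤ LinearMap.ker
        ((LinearMap.trace ℝ V).comp (ρ.toLinearMap.comp (LinearMap.mulLeft ℝ x))) :=
      Submodule.span_le.2 fun h hh => htrG h hh
    exact hle hy
  have h0 : N = 0 := by
    rw [← hx]
    change LinearMap.toMatrix b b (ρ x) = 0
    rw [eq_zero_of_trace_mul_eq_zero hirr htr, map_zero]
  rw [mem_sphere_zero_iff_norm, h0, norm_zero] at hN
  exact zero_ne_one hN

end Semisimplification

section Degeneration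

universe u

variable {𝒜 : Type*} [Ring 𝒜] [Algebra ℝ 𝒜] {V : Type u} [AddCommGroup V] [Module ℝ V]

/-- The restriction of a representation to an invariant subspace. -/
def restrictRep (ρ : 𝒜 →ₐ[ℝ] Module.End ℝ V) (W : Submodule ℝ V)
    (hW : ∀ a, ∀ w ∈ W, ρ a w ∈ W) : 𝒜 →ₐ[ℝ] Module.End ℝ W :=
  AlgHom.ofLinearMap
    { toFun := fun a => (ρ a).restrict (hW a)
      map_add' := fun a b => by ext; simp
      map_smul' := fun c a => by ext; simp }
    (by ext; simp) (fun a b => by ext; simp)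

theorem coe_restrictRep_apply (ρ : 𝒜 →ₐ[ℝ] Module.End ℝ V) (W : Submodule ℝ V)
    (hW : ∀ a, ∀ w ∈ W, ρ a w ∈ W) (a : 𝒜) (w : W) :
    (restrictRep ρ W hW a w : V) = ρ a w := rfl

/-- The representation induced on the quotient by an invariant subspace. -/
def quotientRep (ρ : 𝒜 →ₐ[ℝ] Module.End ℝ V) (W : Submodule ℝ V)
    (hW : ∀ a, ∀ w ∈ W, ρ a w ∈ W) : 𝒜 →ₐ[ℝ] Module.End ℝ (V ⧸ W) :=
  AlgHom.ofLinearMap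
    { toFun := fun a => W.mapQ W (ρ a) (hW a)
      map_add' := fun a b => by ext; simp
      map_smul' := fun c a => by ext; simp }
    (by ext; simp) (fun a b => by ext; simp)

theorem quotientRep_mkQ (ρ : 𝒜 →ₐ[ℝ] Module.End ℝ V) (W : Submodule ℝ V)
    (hW : ∀ a, ∀ w ∈ W, ρ a w ∈ W) (a : 𝒜) (v : V) :
    quotientRep ρ W hW a (W.mkQ v) = W.mkQ (ρ a v) := rfl

variable {G : Set 𝒜} {ρ : 𝒜 →ₐ[ℝ] Module.End ℝ V} {W : Submodule ℝ V}

theorem IsElliptic.restrictRep (hell : IsElliptic G ρ) (hW : ∀ a, ∀ w ∈ W, ρ a w ∈ W) :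
    IsElliptic G (restrictRep ρ W hW) := by
  intro g hg w φ
  obtain ⟨φ', hφ'⟩ := LinearMap.exists_extend φ
  obtain ⟨R, hR⟩ := hell g hg w φ'
  refine ⟨R, fun m => ?_⟩
  have := hR m
  rw [← map_pow] at this ⊢
  rw [← hφ']
  exact this

theorem IsElliptic.quotientRep (hell : IsElliptic G ρ) (hW : ∀ a, ∀ w ∈ W, ρ a w ∈ W) :
    IsElliptic G (quotientRep ρ W hW) := by
  intro g hg q φ
  obtain ⟨v, rfl⟩ := W.mkQ_surjective q
  obtain ⟨R, hR⟩ := hell g hg v (φ.comp W.mkQ)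
  refine ⟨R, fun m => ?_⟩
  have := hR m
  rw [← map_pow] at this ⊢
  exact this

theorem HasBoundedDegeneration.of_restrictRep_of_quotientRep
    (hW : ∀ a, ∀ w ∈ W, ρ a w ∈ W)
    (h₁ : HasBoundedDegeneration G (_root_.restrictRep ρ W hW))
    (h₂ : HasBoundedDegeneration G (_root_.quotientRep ρ W hW)) :
    HasBoundedDegeneration G ρ := by
  obtain ⟨ι₁, _, _, L₁, C₁, hC₁, hL₁⟩ := h₁
  obtain ⟨ι₂, _, _, L₂, C₂, hC₂, hL₂⟩ := h₂
  refine ⟨ι₁ ⊕ ι₂, inferInstance, inferInstance,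
    { toFun := fun a => Matrix.fromBlocks (L₁ a) 0 0 (L₂ a)
      map_add' := fun a b => by simp [Matrix.fromBlocks_add]
      map_smul' := fun c a => by simp [Matrix.fromBlocks_smul] },
    max (max C₁ C₂) 0, ?_, ?_⟩
  · rintro g hg (i | i) (j | j)
    · exact (hC₁ g hg i j).trans ((le_max_left _ _).trans (le_max_left _ _))
    · simp
    · simp
    · exact (hC₂ g hg i j).trans ((le_max_right _ _).trans (le_max_left _ _))
  intro F ε hε
  obtain ⟨b₁, hb₁⟩ := hL₁ F ε hε
  obtain ⟨b₂, hb₂⟩ := hL₂ F ε hε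
  set b := Module.Basis.sumQuot b₁ b₂
  obtain ⟨K, hK⟩ : ∃ K : ℝ, ∀ a ∈ F, ∀ i j, |b.repr (ρ a (b j)) i| ≤ K := by
    refine ⟨∑ a ∈ F, ∑ i, ∑ j, |b.repr (ρ a (b j)) i|, fun a ha i j => ?_⟩
    calc _ ≤ ∑ j, |b.repr (ρ a (b j)) i| :=
          Finset.single_le_sum (f := fun j => |b.repr (ρ a (b j)) i|)
            (fun _ _ => abs_nonneg _) (Finset.mem_univ j)
      _ ≤ ∑ i, ∑ j, |b.repr (ρ a (b j)) i| :=
          Finset.single_le_sum (f := fun i => ∑ j, |b.repr (ρ a (b j)) i|)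
            (fun _ _ => by positivity) (Finset.mem_univ i)
      _ ≤ _ := Finset.single_le_sum (f := fun a => ∑ i, ∑ j, |b.repr (ρ a (b j)) i|)
            (fun _ _ => by positivity) ha
  have hs : 0 < ε / (|K| + 1) := by positivity
  let s : ℝˣ := Units.mk0 _ hs.ne'
  refine ⟨b.unitsSMul (Sum.elim (fun _ => 1) fun _ => s), ?_⟩
  rintro a ha (i | i) (j | j)
  · refine le_trans (le_of_eq ?_) (hb₁ a ha i j)
    rw [LinearMap.toMatrix_apply, LinearMap.toMatrix_apply, Module.Basis.repr_unitsSMul,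
      Module.Basis.unitsSMul_apply]
    simp only [Sum.elim_inl, inv_one, one_smul, b, Module.Basis.sumQuot_inl]
    rw [← coe_restrictRep_apply ρ W hW, Module.Basis.sumQuot_repr_inl]
    rfl
  · rw [LinearMap.toMatrix_apply, Module.Basis.repr_unitsSMul, Module.Basis.unitsSMul_apply]
    simp only [Sum.elim_inl, Sum.elim_inr, inv_one, one_smul, LinearMap.coe_mk, AddHom.coe_mk,
      Matrix.fromBlocks_apply₁₂, Matrix.zero_apply, sub_zero]
    have : b.repr (ρ a (s • b (Sum.inr j))) (Sum.inl i)
        = ε / (|K| + 1) * b.repr (ρ a (b (Sum.inr j))) (Sum.inl i) := by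
      simp [s, Units.smul_def]
    rw [this, abs_mul, abs_of_pos hs, div_mul_eq_mul_div, div_le_iff₀ (by positivity)]
    gcongr
    exact ((hK a ha _ _).trans (le_abs_self K)).trans (by linarith)
  · rw [LinearMap.toMatrix_apply, Module.Basis.repr_unitsSMul, Module.Basis.unitsSMul_apply]
    simp only [Sum.elim_inl, Sum.elim_inr, one_smul, LinearMap.coe_mk, AddHom.coe_mk,
      Matrix.fromBlocks_apply₂₁, Matrix.zero_apply, sub_zero, b, Module.Basis.sumQuot_inl]
    rw [Module.Basis.sumQuot_repr_inr_of_mem _ _ _ (hW a _ (b₁ j).2)]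
    simpa using hε.le
  · refine le_trans (le_of_eq ?_) (hb₂ a ha i j)
    rw [LinearMap.toMatrix_apply, LinearMap.toMatrix_apply, Module.Basis.repr_unitsSMul,
      Module.Basis.unitsSMul_apply]
    have h3 : b₂ j = W.mkQ (b (Sum.inr j)) := (Module.Basis.sumQuot_inr b₁ b₂ j).symm
    rw [h3, quotientRep_mkQ, ← Module.Basis.sumQuot_repr_inr b₁ b₂]
    simp only [Sum.elim_inr, Units.smul_def, Units.val_inv_eq_inv_val, Units.val_mk0, s, map_smul,
      Finsupp.smul_apply, smul_eq_mul, LinearMap.coe_mk, AddHom.coe_mk, Matrix.fromBlocks_apply₂₂]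
    rw [inv_mul_cancel_left₀ hs.ne']

theorem IsElliptic.hasBoundedDegeneration {G : Set 𝒜} (hspan : Submodule.span ℝ G = ⊤)
    (hmul : ∀ g ∈ G, ∀ h ∈ G, g * h ∈ G) {d : ℕ} :
    ∀ {V : Type u} [AddCommGroup V] [Module ℝ V] [FiniteDimensional ℝ V]
      {ρ : 𝒜 →ₐ[ℝ] Module.End ℝ V}, Module.finrank ℝ V = d → IsElliptic G ρ →
      HasBoundedDegeneration G ρ := by
  induction d using Nat.strong_induction_on with
  | _ d ih =>
  intro V _ _ _ ρ hd hell
  by_cases hirr : ∀ W : Submodule ℝ V, (∀ a, ∀ w ∈ W, ρ a w ∈ W) → W = ⊥ ∨ W = ⊤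
  · obtain ⟨C, hC⟩ := exists_bound_of_irreducible hspan hmul hell hirr (Module.finBasis ℝ V)
    exact ⟨_, inferInstance, inferInstance,
      (LinearMap.toMatrix (Module.finBasis ℝ V) (Module.finBasis ℝ V)).toLinearMap.comp
        ρ.toLinearMap, C, hC,
      fun F ε hε => ⟨Module.finBasis ℝ V, fun a _ i j => by simpa using hε.le⟩⟩
  · push Not at hirr
    obtain ⟨W, hW, hbot, htop⟩ := hirr
    have h1 : Module.finrank ℝ W < d := hd ▸ Submodule.finrank_lt htop
    have h2 : Module.finrank ℝ (V ⧸ W) < d := by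
      have := W.finrank_quotient_add_finrank
      have := Submodule.one_le_finrank_iff.2 hbot
      omega
    exact .of_restrictRep_of_quotientRep hW (ih _ h1 rfl (hell.restrictRep hW))
      (ih _ h2 rfl (hell.quotientRep hW))

end Degeneration

section MatrixGroups

open scoped Matrix.Norms.Operator

/-- A linear map that is small on a basis is small. -/
theorem exists_norm_le_of_basis {r X Y : Type*} [Fintype r] [NormedAddCommGroup X]
    [NormedSpace ℝ X] [FiniteDimensional ℝ X] [NormedAddCommGroup Y] [NormedSpace ℝ Y]
    (e : Module.Basis r ℝ X) :
    ∃ K > 0, ∀ (f : X →ₗ[ℝ] Y) (ε : ℝ), (∀ i, ‖f (e i)‖ ≤ ε) → ∀ x, ‖f x‖ ≤ K * ε * ‖x‖ := by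
  refine ⟨(∑ i, ‖(e.coord i).toContinuousLinearMap‖) + 1, by positivity, fun f ε hf x => ?_⟩
  rcases isEmpty_or_nonempty r with hr | ⟨⟨i₀⟩⟩
  · have : x = 0 := by simpa using (e.sum_repr x).symm
    simp [this]
  have hε : 0 ≤ ε := (norm_nonneg _).trans (hf i₀)
  calc ‖f x‖ = ‖∑ i, e.repr x i • f (e i)‖ := by
        conv_lhs => rw [← e.sum_repr x, map_sum]
        simp only [map_smul]
    _ ≤ ∑ i, ‖(e.coord i).toContinuousLinearMap‖ * ‖x‖ * ε := by
        refine (norm_sum_le _ _).trans (Finset.sum_le_sum fun i _ => ?_)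
        rw [norm_smul]
        gcongr
        · exact (e.coord i).toContinuousLinearMap.le_opNorm x
        · exact hf i
    _ = (∑ i, ‖(e.coord i).toContinuousLinearMap‖) * ε * ‖x‖ := by
        rw [Finset.sum_mul, Finset.sum_mul]
        exact Finset.sum_congr rfl fun i _ => by ring
    _ ≤ _ := by gcongr; linarith

variable {κ : Type*} [Fintype κ] [DecidableEq κ]

/-- Groups of matrices with bounded powers have a semisimplification. -/
theorem exists_isSemisimplification {G : Subgroup (Matrix κ κ ℝ)ˣ}
    (hG : ∀ g ∈ G, ∃ R, ∀ m : ℕ, ‖((g ^ m : (Matrix κ κ ℝ)ˣ) : Matrix κ κ ℝ)‖ ≤ R) :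
    ∃ (ι : Type) (_ : Fintype ι) (_ : DecidableEq ι) (L : Matrix κ κ ℝ →ₗ[ℝ] Matrix ι ι ℝ) (C : ℝ),
      Nonempty (Module.Basis ι ℝ (κ → ℝ)) ∧ IsSemisimplification G L C := by
  let 𝒜 : Subalgebra ℝ (Matrix κ κ ℝ) :=
    (unitSpan G).toSubalgebra (one_mem_unitSpan G) fun _ _ => mul_mem_unitSpan
  let ρ : 𝒜 →ₐ[ℝ] Module.End ℝ (κ → ℝ) :=
    (Matrix.toLinAlgEquiv' : Matrix κ κ ℝ ≃ₐ[ℝ] _).toAlgHom.comp 𝒜.val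
  let G' : Set 𝒜 := Subtype.val ⁻¹' ((fun g : (Matrix κ κ ℝ)ˣ => (g : Matrix κ κ ℝ)) '' (G : Set _))
  have hspan : Submodule.span ℝ G' = ⊤ := Submodule.span_span_coe_preimage
  have hmul : ∀ g ∈ G', ∀ h ∈ G', g * h ∈ G' := by
    rintro ⟨_, _⟩ ⟨g, hg, rfl⟩ ⟨_, _⟩ ⟨h, hh, rfl⟩
    exact ⟨g * h, G.mul_mem hg hh, rfl⟩
  have hell : IsElliptic G' ρ := by
    rintro ⟨_, hg'⟩ ⟨g, hg, rfl⟩ v φ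
    obtain ⟨R, hR⟩ := hG g hg
    refine ⟨‖φ.toContinuousLinearMap‖ * (R * ‖v‖), fun m => ?_⟩
    rw [← map_pow]
    refine (φ.toContinuousLinearMap.le_opNorm _).trans ?_
    gcongr
    change ‖((g : Matrix κ κ ℝ) ^ m).mulVec v‖ ≤ _
    refine (Matrix.linfty_opNorm_mulVec _ _).trans ?_
    gcongr
    simpa using hR m
  obtain ⟨ι, _, _, L, C, hC, hL⟩ := hell.hasBoundedDegeneration hspan hmul rfl
  obtain ⟨L', hL'⟩ := LinearMap.exists_extend (p := Subalgebra.toSubmodule 𝒜) L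
  have hLL' : ∀ a : 𝒜, L' a = L a := fun a => LinearMap.congr_fun hL' a
  refine ⟨ι, inferInstance, inferInstance, L', Fintype.card ι * |C|, ⟨(hL ∅ 1 one_pos).choose⟩,
    ⟨fun g hg => ?_, fun δ hδ => ?_⟩⟩
  · have hg' : (⟨g, coe_mem_unitSpan hg⟩ : 𝒜) ∈ G' := ⟨g, hg, rfl⟩
    refine linfty_opNorm_le_of_forall_le (abs_nonneg C) fun i j => ?_
    have := hC _ hg' i j
    rw [← hLL'] at this
    exact this.trans (le_abs_self C)
  · obtain ⟨K, hK, hKf⟩ := exists_norm_le_of_basis (Y := Matrix ι ι ℝ)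
      (Module.finBasis ℝ (Subalgebra.toSubmodule 𝒜))
    set e := Module.finBasis ℝ (Subalgebra.toSubmodule 𝒜)
    have hε : 0 < δ / (K * (Fintype.card ι + 1)) := by positivity
    obtain ⟨b, hb⟩ := hL (Finset.univ.image e) _ hε
    refine ⟨((Matrix.toLinAlgEquiv' : Matrix κ κ ℝ ≃ₐ[ℝ] _).trans
      (LinearMap.toMatrixAlgEquiv b)).toAlgHom, AlgEquiv.injective _, fun a ha => ?_⟩
    set φ := (Matrix.toLinAlgEquiv' : Matrix κ κ ℝ ≃ₐ[ℝ] _).trans (LinearMap.toMatrixAlgEquiv b)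
    refine (hKf ((φ.toLinearMap - L').comp (Submodule.subtype _))
      (Fintype.card ι * (δ / (K * (Fintype.card ι + 1)))) (fun i => ?_) ⟨a, ha⟩).trans ?_
    · refine linfty_opNorm_le_of_forall_le hε.le fun p q => ?_
      have := hb (e i) (Finset.mem_image_of_mem _ (Finset.mem_univ i)) p q
      rw [← hLL'] at this
      exact this
    · change _ * ‖a‖ ≤ _
      gcongr
      rw [mul_div_assoc', mul_div_assoc', div_le_iff₀ (by positivity)]
      nlinarith [mul_pos hδ hK]

/-- A closed group of matrices all of whose elements have bounded powers is bounded. -/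
theorem exists_bound_of_bounded_pow [Nonempty κ] {G : Subgroup (Matrix κ κ ℝ)ˣ}
    (hcl : IsClosed (unitSet G))
    (hG : ∀ g ∈ G, ∃ R, ∀ m : ℕ, ‖((g ^ m : (Matrix κ κ ℝ)ˣ) : Matrix κ κ ℝ)‖ ≤ R) :
    ∃ M, ∀ g ∈ G, ‖(g : Matrix κ κ ℝ)‖ ≤ M := by
  obtain ⟨ι, _, _, L, C, ⟨b⟩, hL⟩ := exists_isSemisimplification hG
  have : Nonempty ι := b.index_nonempty
  have : CompleteSpace (Matrix κ κ ℝ) := FiniteDimensional.complete ℝ _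
  exact hL.exists_bound exists_bound_of_commute_matrix hcl hG

end MatrixGroups

section Distal

open scoped Matrix.Norms.Operator

variable {m : ℕ}

/-- A set of matrices acts distally on the unit sphere. -/
def ActsDistally (S : Set (Matrix (Fin m) (Fin m) ℝ)) : Prop :=
  ∀ x y : EuclideanSpace ℝ (Fin m), ‖x‖ = 1 → ‖y‖ = 1 → x ≠ y →
    ∀ p ∈ closure {q : EuclideanSpace ℝ (Fin m) × EuclideanSpace ℝ (Fin m) |
      ∃ T ∈ S, q = (nact T x, nact T y)}, p.1 ≠ p.2

theorem ActsDistally.mono {S S' : Set (Matrix (Fin m) (Fin m) ℝ)} (hS : ActsDistally S)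
    (h : S' ⊆ S) : ActsDistally S' := fun x y hx hy hxy p hp =>
  hS x y hx hy hxy p (closure_mono (by rintro _ ⟨T, hT, rfl⟩; exact ⟨T, h hT, rfl⟩) hp)

theorem nact_smul_left {c : ℝ} (hc : 0 < c) (A : Matrix (Fin m) (Fin m) ℝ)
    (x : EuclideanSpace ℝ (Fin m)) : nact (c • A) x = nact A x := by
  simp only [nact, map_smul, LinearMap.smul_apply, norm_smul, Real.norm_of_nonneg hc.le, smul_smul]
  congr 1
  field_simp

theorem nact_smul_right {c : ℝ} (hc : 0 < c) (A : Matrix (Fin m) (Fin m) ℝ)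
    (x : EuclideanSpace ℝ (Fin m)) : nact A (c • x) = nact A x := by
  simp only [nact, map_smul, norm_smul, Real.norm_of_nonneg hc.le, smul_smul]
  congr 1
  field_simp

theorem tendsto_nact {T : ℕ → Matrix (Fin m) (Fin m) ℝ} {B : Matrix (Fin m) (Fin m) ℝ}
    (hT : Tendsto T atTop (𝓝 B)) {x : EuclideanSpace ℝ (Fin m)}
    (hx : Matrix.toEuclideanLin B x ≠ 0) :
    Tendsto (fun k => nact (T k) x) atTop (𝓝 (nact B x)) := by
  have hc : Continuous fun A : Matrix (Fin m) (Fin m) ℝ => Matrix.toEuclideanLin A x :=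
    ((LinearMap.applyₗ x).comp
      (Matrix.toEuclideanLin : Matrix (Fin m) (Fin m) ℝ ≃ₗ[ℝ] _).toLinearMap
      ).continuous_of_finiteDimensional
  have h := (hc.tendsto B).comp hT
  exact (h.norm.inv₀ (norm_ne_zero_iff.2 hx)).smul h

theorem toEuclideanLin_injective_of_det {B : Matrix (Fin m) (Fin m) ℝ} (hB : B.det = 1) :
    Function.Injective (Matrix.toEuclideanLin B) := by
  rw [injective_iff_map_eq_zero]
  intro z hz
  by_contra hne
  have : ∃ v ≠ 0, B.mulVec v = 0 := ⟨WithLp.ofLp z, by simpa using hne, by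
    simpa [Matrix.toLpLin_apply] using hz⟩
  rw [Matrix.exists_mulVec_eq_zero_iff, hB] at this
  exact one_ne_zero this

/-- A bounded set of unimodular matrices acts distally. -/
theorem actsDistally_of_bound {S : Set (Matrix (Fin m) (Fin m) ℝ)} (hdet : ∀ A ∈ S, A.det = 1)
    {M : ℝ} (hM : ∀ A ∈ S, ‖A‖ ≤ M) : ActsDistally S := by
  intro x y hx hy hxy p hp heq
  obtain ⟨q, hq, hlim⟩ := mem_closure_iff_seq_limit.1 hp
  choose T hTS hT using hq
  obtain ⟨B, -, ψ, hψ, hB⟩ := (isCompact_closedBall (0 : Matrix (Fin m) (Fin m) ℝ) M).tendsto_subseq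
    (x := T) (fun k => by simpa using hM _ (hTS k))
  have hdetB : B.det = 1 := by
    have hc : Continuous fun A : Matrix (Fin m) (Fin m) ℝ => A.det := by fun_prop
    refine tendsto_nhds_unique ((hc.tendsto B).comp hB) ?_
    simp [Function.comp_def, hdet _ (hTS _)]
  have hinj := toEuclideanLin_injective_of_det hdetB
  have hne : ∀ z : EuclideanSpace ℝ (Fin m), ‖z‖ = 1 → Matrix.toEuclideanLin B z ≠ 0 := by
    intro z hz h0
    have : z = 0 := hinj (by rw [h0, map_zero])
    simp [this] at hz
  have hlim' := hlim.comp hψ.tendsto_atTop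
  have h1 : p.1 = nact B x := by
    refine tendsto_nhds_unique ((continuous_fst.tendsto p).comp hlim') ?_
    simpa [Function.comp_def, hT] using tendsto_nact hB (hne x hx)
  have h2 : p.2 = nact B y := by
    refine tendsto_nhds_unique ((continuous_snd.tendsto p).comp hlim') ?_
    simpa [Function.comp_def, hT] using tendsto_nact hB (hne y hy)
  rw [h1, h2, nact, nact, ← map_smul, ← map_smul] at heq
  have h3 := hinj heq
  have hx' := norm_pos_iff.2 (hne x hx)
  have hy' := norm_pos_iff.2 (hne y hy)
  have h4 := congrArg norm h3
  rw [norm_smul, norm_smul, hx, hy, mul_one, mul_one, norm_inv, norm_inv, norm_norm,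
    norm_norm] at h4
  rw [h4] at h3
  exact hxy (smul_right_injective _ (inv_ne_zero hy'.ne') h3)

/-- A set of unimodular matrices acting distally is bounded. -/
theorem ActsDistally.exists_bound (hm : m ≠ 0) {S : Set (Matrix (Fin m) (Fin m) ℝ)}
    (hdet : ∀ A ∈ S, A.det = 1) (hS : ActsDistally S) : ∃ M, ∀ A ∈ S, ‖A‖ ≤ M := by
  by_contra! hunb
  choose T hTS hTk using fun k : ℕ => hunb k
  have hpos : ∀ k, 0 < ‖T k‖ := fun k => (Nat.cast_nonneg k).trans_lt (hTk k)
  let u : ℕ → Matrix (Fin m) (Fin m) ℝ := fun k => ‖T k‖⁻¹ • T k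
  have hu : ∀ k, u k ∈ Metric.sphere (0 : Matrix (Fin m) (Fin m) ℝ) 1 := fun k => by
    rw [mem_sphere_zero_iff_norm, norm_smul, norm_inv, norm_norm, inv_mul_cancel₀ (hpos k).ne']
  obtain ⟨B, hB, ψ, hψ, hlim⟩ :=
    (isCompact_sphere (0 : Matrix (Fin m) (Fin m) ℝ) 1).tendsto_subseq hu
  have hinv : Tendsto (fun k => ‖T (ψ k)‖⁻¹) atTop (𝓝 0) :=
    (tendsto_inv_atTop_zero.comp (tendsto_atTop_mono (fun k => (hTk k).le)
      tendsto_natCast_atTop_atTop)).comp hψ.tendsto_atTop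
  have hdetB : B.det = 0 := by
    have hc : Continuous fun A : Matrix (Fin m) (Fin m) ℝ => A.det := by fun_prop
    refine tendsto_nhds_unique ((hc.tendsto B).comp hlim) ?_
    have : Tendsto (fun k => ‖T (ψ k)‖⁻¹ ^ m) atTop (𝓝 0) := by
      simpa [hm] using hinv.pow m
    simpa [Function.comp_def, u, hdet _ (hTS _)] using this
  obtain ⟨z', hz', hBz'⟩ := Matrix.exists_mulVec_eq_zero_iff.2 hdetB
  obtain ⟨z, hz, hBz⟩ : ∃ z : EuclideanSpace ℝ (Fin m), z ≠ 0 ∧ Matrix.toEuclideanLin B z = 0 :=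
    ⟨WithLp.toLp 2 z', by simpa using hz', by simp [Matrix.toLpLin_apply, hBz']⟩
  obtain ⟨w, hw⟩ : ∃ w, Matrix.toEuclideanLin B w ≠ 0 := by
    by_contra! h
    have hB0 : B = 0 := Matrix.toEuclideanLin.injective (by rw [map_zero]; exact LinearMap.ext h)
    simp [hB0] at hB
  have hBwz : Matrix.toEuclideanLin B (w + z) = Matrix.toEuclideanLin B w := by
    rw [map_add, hBz, add_zero]
  have hw0 : w ≠ 0 := fun h => hw (by rw [h, map_zero])
  have hwz0 : w + z ≠ 0 := fun h => hw (by rw [← hBwz, h, map_zero])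
  have hwp := norm_pos_iff.2 hw0
  have hwzp := norm_pos_iff.2 hwz0
  refine hS (‖w‖⁻¹ • w) (‖w + z‖⁻¹ • (w + z)) (by simp [norm_smul, hwp.ne'])
    (by rw [norm_smul, norm_inv, norm_norm, inv_mul_cancel₀ hwzp.ne']) (fun heq => ?_)
    (nact B w, nact B w) ?_ rfl
  · have h1 := congrArg (Matrix.toEuclideanLin B) heq
    rw [map_smul, map_smul, hBwz] at h1
    have h2 := smul_left_injective ℝ hw h1
    rw [show ‖w‖⁻¹ = ‖w + z‖⁻¹ from h2] at heq
    exact hz (left_eq_add.1 (smul_right_injective _ (inv_ne_zero hwzp.ne') heq))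
  · refine mem_closure_of_tendsto (b := atTop) (f := fun k =>
      (nact (T (ψ k)) (‖w‖⁻¹ • w), nact (T (ψ k)) (‖w + z‖⁻¹ • (w + z)))) ?_
      (Eventually.of_forall fun k => ⟨_, hTS _, rfl⟩)
    have hlimw : ∀ v, Matrix.toEuclideanLin B v = Matrix.toEuclideanLin B w →
        Tendsto (fun k => nact (T (ψ k)) (‖v‖⁻¹ • v)) atTop (𝓝 (nact B w)) := by
      intro v hv
      have hv0 : v ≠ 0 := fun h => hw (by rw [← hv, h, map_zero])
      have h1 := tendsto_nact hlim (x := v) (by rwa [hv])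
      have h2 : nact B v = nact B w := by rw [nact, nact, hv]
      rw [h2] at h1
      refine h1.congr fun k => ?_
      rw [nact_smul_right (inv_pos.2 (norm_pos_iff.2 hv0))]
      exact nact_smul_left (inv_pos.2 (hpos _)) _ _
    exact (hlimw w rfl).prodMk_nhds (hlimw (w + z) hBwz)

end Distal

section Closed

open scoped Matrix.Norms.Operator

variable {m : ℕ}

/-- A closed semigroup of unimodular matrices contains the inverses of its elements with bounded
powers. -/
theorem adjugate_mem_of_bounded_pow {S : Set (Matrix (Fin m) (Fin m) ℝ)}
    (hmul : ∀ A ∈ S, ∀ B ∈ S, A * B ∈ S) (hclosed : IsClosed S)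
    {T : Matrix (Fin m) (Fin m) ℝ} (hT : T ∈ S) (hdet : T.det = 1) {M : ℝ}
    (hM : ∀ k : ℕ, ‖T ^ (k + 1)‖ ≤ M) : T.adjugate ∈ S := by
  have hpow : ∀ k : ℕ, T ^ (k + 1) ∈ S := by
    intro k
    induction k with
    | zero => simpa using hT
    | succ k ih => rw [pow_succ]; exact hmul _ ih _ hT
  obtain ⟨B, -, ψ, hψ, hB⟩ := (isCompact_closedBall (0 : Matrix (Fin m) (Fin m) ℝ) M).tendsto_subseq
    (x := fun k => T ^ (k + 1)) (fun k => by simpa using hM k)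
  have hdetB : B.det = 1 := by
    have hc : Continuous fun A : Matrix (Fin m) (Fin m) ℝ => A.det := by fun_prop
    refine tendsto_nhds_unique ((hc.tendsto B).comp hB) ?_
    simp [Function.comp_def, hdet]
  have hadj : Continuous fun A : Matrix (Fin m) (Fin m) ℝ => A.adjugate :=
    continuous_id.matrix_adjugate
  have hlim := ((hB.comp (tendsto_add_atTop_nat 2)).mul ((hadj.tendsto B).comp hB)).mul_const
    T.adjugate
  rw [Matrix.mul_adjugate, hdetB, one_smul, one_mul] at hlim
  refine hclosed.mem_of_tendsto hlim (Eventually.of_forall fun k => ?_)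
  have hlt : ψ k + 2 ≤ ψ (k + 2) := by
    have := hψ (show k < k + 1 by omega)
    have := hψ (show k + 1 < k + 2 by omega)
    omega
  obtain ⟨j, hj⟩ := Nat.exists_eq_add_of_le hlt
  have hsplit : T ^ (ψ (k + 2) + 1) = T ^ (j + 1) * T * T ^ (ψ k + 1) := by
    rw [← pow_succ, ← pow_add, hj]
    congr 1
    omega
  change T ^ (ψ (k + 2) + 1) * (T ^ (ψ k + 1)).adjugate * T.adjugate ∈ S
  rw [hsplit, mul_assoc (T ^ (j + 1) * T), Matrix.mul_adjugate, Matrix.det_pow, hdet, one_pow,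
    one_smul, mul_one, mul_assoc, Matrix.mul_adjugate, hdet, one_smul, mul_one]
  exact hpow j

/-- A closed semigroup of unimodular matrices all of whose elements have bounded powers is
bounded. -/
theorem exists_bound_of_closed_semigroup (hm : m ≠ 0) {S : Set (Matrix (Fin m) (Fin m) ℝ)}
    (hdet : ∀ A ∈ S, A.det = 1) (hmul : ∀ A ∈ S, ∀ B ∈ S, A * B ∈ S) (hclosed : IsClosed S)
    (hpow : ∀ T ∈ S, ∃ M, ∀ k : ℕ, ‖T ^ (k + 1)‖ ≤ M) : ∃ M, ∀ A ∈ S, ‖A‖ ≤ M := by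
  rcases S.eq_empty_or_nonempty with rfl | ⟨T₀, hT₀⟩
  · simp
  have hadj : ∀ T ∈ S, T.adjugate ∈ S := fun T hT =>
    have ⟨_, hM⟩ := hpow T hT
    adjugate_mem_of_bounded_pow hmul hclosed hT (hdet T hT) hM
  have hmuladj : ∀ T ∈ S, T * T.adjugate = 1 := fun T hT => by
    rw [Matrix.mul_adjugate, hdet T hT, one_smul]
  have hadjmul : ∀ T ∈ S, T.adjugate * T = 1 := fun T hT => by
    rw [Matrix.adjugate_mul, hdet T hT, one_smul]
  let G : Subgroup (Matrix (Fin m) (Fin m) ℝ)ˣ :=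
    { carrier := {g | (g : Matrix (Fin m) (Fin m) ℝ) ∈ S}
      one_mem' := by
        have := hmul _ hT₀ _ (hadj _ hT₀)
        rwa [hmuladj _ hT₀] at this
      mul_mem' := fun {g h} hg hh => hmul _ hg _ hh
      inv_mem' := fun {g} hg => by
        have h1 := Units.inv_eq_of_mul_eq_one_right (hmuladj _ hg)
        change ((g⁻¹ : (Matrix (Fin m) (Fin m) ℝ)ˣ) : Matrix (Fin m) (Fin m) ℝ) ∈ S
        rw [h1]
        exact hadj _ hg }
  have hGS : unitSet G = S := by
    ext A
    refine ⟨?_, fun hA => ⟨⟨A, A.adjugate, hmuladj A hA, hadjmul A hA⟩, hA, rfl⟩⟩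
    rintro ⟨g, hg, rfl⟩
    exact hg
  have : Nonempty (Fin m) := ⟨⟨0, Nat.pos_of_ne_zero hm⟩⟩
  obtain ⟨M, hM⟩ := exists_bound_of_bounded_pow (G := G) (by rw [hGS]; exact hclosed) (by
    intro g hg
    obtain ⟨R, hR⟩ := hpow _ hg
    refine ⟨max R 1, fun k => ?_⟩
    cases k with
    | zero => simp
    | succ k => simpa using Or.inl (hR k))
  refine ⟨M, fun A hA => ?_⟩
  rw [← hGS] at hA
  obtain ⟨g, hg, rfl⟩ := hA
  exact hM g hg

/-- A closed semigroup of unimodular matrices acts distally if all its cyclic subsemigroups do. -/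
theorem actsDistally_of_forall_cyclic (hm : m ≠ 0) {S : Set (Matrix (Fin m) (Fin m) ℝ)}
    (hdet : ∀ A ∈ S, A.det = 1) (hmul : ∀ A ∈ S, ∀ B ∈ S, A * B ∈ S) (hclosed : IsClosed S)
    (h : ∀ T ∈ S, ActsDistally (Set.range fun k : ℕ => T ^ (k + 1))) : ActsDistally S := by
  obtain ⟨M, hM⟩ := exists_bound_of_closed_semigroup hm hdet hmul hclosed fun T hT => by
    obtain ⟨M, hM⟩ := (h T hT).exists_bound hm (by
      rintro _ ⟨k, rfl⟩
      simp [hdet T hT])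
    exact ⟨M, fun k => hM _ ⟨k, rfl⟩⟩
  exact actsDistally_of_bound hdet hM

end Closed

theorem stmt6 (n : ℕ) (S : Set (Matrix (Fin (n + 1)) (Fin (n + 1)) ℝ))
    (hdet : ∀ A ∈ S, A.det = 1)
    (hmul : ∀ A ∈ S, ∀ B ∈ S, A * B ∈ S)
    (hclosed : IsClosed S) :
    (∀ x y : EuclideanSpace ℝ (Fin (n + 1)), ‖x‖ = 1 → ‖y‖ = 1 → x ≠ y →
      ∀ p ∈ closure {q : EuclideanSpace ℝ (Fin (n + 1)) × EuclideanSpace ℝ (Fin (n + 1)) |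
          ∃ T ∈ S, q = (nact T x, nact T y)},
        p.1 ≠ p.2)
    ↔
    (∀ T ∈ S, ∀ x y : EuclideanSpace ℝ (Fin (n + 1)), ‖x‖ = 1 → ‖y‖ = 1 → x ≠ y →
      ∀ p ∈ closure {q : EuclideanSpace ℝ (Fin (n + 1)) × EuclideanSpace ℝ (Fin (n + 1)) |
          ∃ m : ℕ, q = (nact (T ^ (m + 1)) x, nact (T ^ (m + 1)) y)},
        p.1 ≠ p.2) := by
  have hcyc : ∀ T : Matrix (Fin (n + 1)) (Fin (n + 1)) ℝ,
      ActsDistally (Set.range fun k : ℕ => T ^ (k + 1)) ↔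
      ∀ x y : EuclideanSpace ℝ (Fin (n + 1)), ‖x‖ = 1 → ‖y‖ = 1 → x ≠ y →
      ∀ p ∈ closure {q : EuclideanSpace ℝ (Fin (n + 1)) × EuclideanSpace ℝ (Fin (n + 1)) |
          ∃ m : ℕ, q = (nact (T ^ (m + 1)) x, nact (T ^ (m + 1)) y)}, p.1 ≠ p.2 := fun T => by
    simp only [ActsDistally, Set.exists_range_iff]
  simp only [← hcyc]
  refine ⟨fun (h : ActsDistally S) T hT => h.mono ?_,
    actsDistally_of_forall_cyclic n.succ_ne_zero hdet hmul hclosed⟩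
  rintro _ ⟨k, rfl⟩
  induction k with
  | zero => simpa using hT
  | succ k ih =>
    change T ^ (k + 1 + 1) ∈ S
    rw [pow_succ]
    exact hmul _ ih _ hT
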